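/- arXiv:2506.08259 — 4 statements merged into one kernel-verified Lean document; each statement's English description precedes it below -/
import Mathlib

section
/- Let f ∈ MvPolynomial (Fin (k−1)) ℝ, let P̃0 = {π' ∈ Δ̃_{k-1} : f(π') ≤ 0}, and let P0 ⊆ Δ_{k-1} be the corresponding null hypothesis, with ∅ ≠ P0 ≠ Δ_{k-1}. Assume the vanishing ideal of the boundary ∂P̃0 of P̃0 relative to Δ̃_{k-1}, namely {h ∈ MvPolynomial (Fin (k−1)) ℝ : h = 0 on ∂P̃0}, equals the principal ideal generated by f. Then: (i) for every n < totalDegree(f) there is no NTUB test of P0 of sample size n, and there exists an SUB test of P0 of sample size totalDegree(f) (so the NTUB and SUB thresholds both equal totalDegree(f)); (ii) if φ is an NTUB test of P0 of sample size n with size α, then there exists h ∈ MvPolynomial (Fin (k−1)) ℝ of total degree at most n − totalDegree(f), with h ≥ 0 on Δ̃_{k-1}, such that β_φ(π'_1,…,π'_{k-1}, 1−∑ i π' i) = f(π')·h(π') + α for all π' ∈ ℝ^{k-1}, and h > 0 on Δ̃_{k-1} \ P̃0 when φ is SUB; (iii) for every α ∈ (0,1), at sample size n = totalDegree(f) the set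 of c > 0 such that π ↦ c·f(π_1,…,π_{k-1}) + α on Δ_{k-1} equals the power function of some test is nonempty with greatest element c_α, every size-α NTUB test of sample size totalDegree(f) has power function c·f + α with c ∈ (0, c_α], and the test with power function c_α·f + α is strictly unbiased and is the unique UMPU level-α test of that sample size. -/
open Finset

/-- The probability simplex on a finite index set `ι`. -/
def probSimplex (ι : Type) [Fintype ι] : Set (ι → ℝ) :=
  {π | (∀ i, 0 ≤ π i) ∧ ∑ i, π i = 1}

/-- Count vectors of sample size `n`: functions `x : ι → ℕ` with `∑ i, x i = n`. -/
def countVecs (ι : Type) [Fintype ι] [DecidableEq ι] (n : ℕ) : Finset (ι → ℕ) :=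
  (Fintype.piFinset fun _ : ι => Finset.range (n + 1)).filter fun x => ∑ i, x i = n

/-- A (randomized) test of sample size `n`: values in `[0,1]` on all count vectors. -/
def IsTest (ι : Type) [Fintype ι] [DecidableEq ι] (n : ℕ) (φ : (ι → ℕ) → ℝ) : Prop :=
  ∀ x ∈ countVecs ι n, 0 ≤ φ x ∧ φ x ≤ 1

/-- The power function of a test. -/
noncomputable def powerFn (ι : Type) [Fintype ι] [DecidableEq ι] (n : ℕ)
    (φ : (ι → ℕ) → ℝ) (π : ι → ℝ) : ℝ :=
  ∑ x ∈ countVecs ι n, φ x * (Nat.multinomial Finset.univ x : ℝ) * ∏ i, π i ^ x i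

/-- Unbiasedness relative to the null hypothesis `P0`. -/
def Unbiased (ι : Type) [Fintype ι] [DecidableEq ι] (n : ℕ) (P0 : Set (ι → ℝ))
    (φ : (ι → ℕ) → ℝ) : Prop :=
  ∀ π0 ∈ P0, ∀ πA ∈ probSimplex ι \ P0, powerFn ι n φ π0 ≤ powerFn ι n φ πA

/-- Non-trivial unbiased test: unbiased with non-constant power on the simplex. -/
def IsNTUB (ι : Type) [Fintype ι] [DecidableEq ι] (n : ℕ) (P0 : Set (ι → ℝ))
    (φ : (ι → ℕ) → ℝ) : Prop :=
  Unbiased ι n P0 φ ∧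
    ∃ π ∈ probSimplex ι, ∃ π' ∈ probSimplex ι, powerFn ι n φ π ≠ powerFn ι n φ π'

/-- Strictly unbiased test. -/
def IsSUB (ι : Type) [Fintype ι] [DecidableEq ι] (n : ℕ) (P0 : Set (ι → ℝ))
    (φ : (ι → ℕ) → ℝ) : Prop :=
  ∀ π0 ∈ P0, ∀ πA ∈ probSimplex ι \ P0, powerFn ι n φ π0 < powerFn ι n φ πA

/-- Level-`α` test. -/
def IsLevel (ι : Type) [Fintype ι] [DecidableEq ι] (n : ℕ) (P0 : Set (ι → ℝ)) (α : ℝ)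
    (φ : (ι → ℕ) → ℝ) : Prop :=
  ∀ π ∈ P0, powerFn ι n φ π ≤ α

/-- A test has size `α` if the supremum of its power over `P0` is `α`. -/
def HasSize (ι : Type) [Fintype ι] [DecidableEq ι] (n : ℕ) (P0 : Set (ι → ℝ)) (α : ℝ)
    (φ : (ι → ℕ) → ℝ) : Prop :=
  IsLUB (powerFn ι n φ '' P0) α

/-- Uniformly most powerful unbiased level-`α` test. -/
def IsUMPU (ι : Type) [Fintype ι] [DecidableEq ι] (n : ℕ) (P0 : Set (ι → ℝ)) (α : ℝ)
    (φ : (ι → ℕ) → ℝ) : Prop :=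
  IsLevel ι n P0 α φ ∧ Unbiased ι n P0 φ ∧
    ∀ ψ, IsTest ι n ψ → IsLevel ι n P0 α ψ → Unbiased ι n P0 ψ →
      ∀ πA ∈ probSimplex ι \ P0, powerFn ι n ψ πA ≤ powerFn ι n φ πA

/-- The projected simplex in `ℝ^(k-1)`. -/
def projSimplex (k : ℕ) : Set (Fin (k - 1) → ℝ) :=
  {π' | (∀ i, 0 ≤ π' i) ∧ ∑ i, π' i ≤ 1}

/-- Identify `π' ∈ Δ̃_{k-1}` with `(π'_1, …, π'_{k-1}, 1 - ∑ i, π' i) ∈ Δ_{k-1}`. -/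
def liftProj (k : ℕ) (π' : Fin (k - 1) → ℝ) : Fin k → ℝ :=
  fun i => if h : (i : ℕ) < k - 1 then π' ⟨(i : ℕ), h⟩ else 1 - ∑ j, π' j

/-- Projection of a point of `Δ_{k-1}` onto its first `k-1` coordinates. -/
def projPoint (k : ℕ) (π : Fin k → ℝ) : Fin (k - 1) → ℝ :=
  fun j => π (Fin.castLE (Nat.sub_le k 1) j)

open MvPolynomial in
noncomputable def hPoly (k n : ℕ) (φ : (Fin k → ℕ) → ℝ) : MvPolynomial (Fin k) ℝ :=
  ∑ x ∈ countVecs (Fin k) n,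
    monomial (Finsupp.equivFunOnFinite.symm x) (φ x * (Nat.multinomial Finset.univ x : ℝ))

lemma mem_countVecs {k n : ℕ} {x : Fin k → ℕ} :
    x ∈ countVecs (Fin k) n ↔ ∑ i, x i = n := by
  unfold countVecs
  simp only [Finset.mem_filter, Fintype.mem_piFinset, Finset.mem_range, and_iff_right_iff_imp]
  intro h i
  have := Finset.single_le_sum (f := x) (fun _ _ => Nat.zero_le _) (Finset.mem_univ i)
  omega

lemma eval_hPoly (k n : ℕ) (φ : (Fin k → ℕ) → ℝ) (π : Fin k → ℝ) :
    MvPolynomial.eval π (hPoly k n φ) = powerFn (Fin k) n φ π := by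
  unfold hPoly powerFn
  rw [map_sum]
  refine Finset.sum_congr rfl fun x _ => ?_
  rw [MvPolynomial.eval_monomial, Finsupp.prod_fintype _ _ (by simp)]
  simp

lemma coeff_hPoly (k n : ℕ) (φ : (Fin k → ℕ) → ℝ) (d : Fin k →₀ ℕ) :
    MvPolynomial.coeff d (hPoly k n φ) =
      if ∑ i, d i = n then φ d * (Nat.multinomial Finset.univ d : ℝ) else 0 := by
  unfold hPoly
  rw [MvPolynomial.coeff_sum]
  simp only [MvPolynomial.coeff_monomial]
  have : ∀ x : Fin k → ℕ, (Finsupp.equivFunOnFinite.symm x = d) ↔ x = ⇑d := by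
    intro x
    rw [Equiv.symm_apply_eq]
    rfl
  simp only [this, Finset.sum_ite_eq', mem_countVecs]

lemma isHom_hPoly (k n : ℕ) (φ : (Fin k → ℕ) → ℝ) : (hPoly k n φ).IsHomogeneous n := by
  unfold hPoly
  refine MvPolynomial.IsHomogeneous.sum _ _ _ fun x hx => ?_
  apply MvPolynomial.isHomogeneous_monomial
  rw [mem_countVecs] at hx
  simp [Finsupp.degree_eq_sum, hx]

lemma exists_of_hom (k n : ℕ) (G : MvPolynomial (Fin k) ℝ) (hG : G.IsHomogeneous n) :
    ∃ φ, hPoly k n φ = G := by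
  refine ⟨fun x => MvPolynomial.coeff (Finsupp.equivFunOnFinite.symm x) G /
    (Nat.multinomial Finset.univ x : ℝ), ?_⟩
  ext d
  rw [coeff_hPoly]
  split_ifs with h
  · have : (Nat.multinomial Finset.univ d : ℝ) ≠ 0 := by
      exact_mod_cast (Nat.multinomial_pos _ _).ne'
    rw [div_mul_cancel₀ _ this]
    congr 1
    ext; simp
  · rw [hG.coeff_eq_zero]
    simpa [Finsupp.degree_eq_sum] using h

lemma powerFn_unique (k n : ℕ) (hk : 2 ≤ k) (φ ψ : (Fin k → ℕ) → ℝ)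
    (h : ∀ π ∈ probSimplex (Fin k), powerFn (Fin k) n φ π = powerFn (Fin k) n ψ π) :
    ∀ x ∈ countVecs (Fin k) n, φ x = ψ x := by
  have key : hPoly k n φ = hPoly k n ψ := by
    apply MvPolynomial.funext_set (fun _ => Set.Ioi (0:ℝ)) (fun _ => Set.Ioi_infinite 0)
    intro π hπ
    have hpos : ∀ i, 0 < π i := fun i => hπ i (Set.mem_univ i)
    have : Nonempty (Fin k) := ⟨⟨0, by omega⟩⟩
    have hs : 0 < ∑ i, π i := Finset.sum_pos (fun i _ => hpos i) Finset.univ_nonempty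
    set s := ∑ i, π i with hsd
    have e : π = s • (fun i => π i / s) := by
      ext i; simp; field_simp
    have hom : ∀ χ, powerFn (Fin k) n χ π = s ^ n * powerFn (Fin k) n χ (fun i => π i / s) := by
      intro χ
      unfold powerFn
      rw [Finset.mul_sum]
      refine Finset.sum_congr rfl fun x hx => ?_
      rw [mem_countVecs] at hx
      have : ∏ i, π i ^ x i = s ^ n * ∏ i, (π i / s) ^ x i := by
        rw [← hx, ← Finset.prod_pow_eq_pow_sum, ← Finset.prod_mul_distrib]
        refine Finset.prod_congr rfl fun i _ => ?_
        rw [← mul_pow]; congr 1; field_simp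
      rw [this]; ring
    rw [eval_hPoly, eval_hPoly, hom, hom ψ, h]
    refine ⟨fun i => (div_pos (hpos i) hs).le, ?_⟩
    rw [← Finset.sum_div]; exact div_self hs.ne'
  intro x hx
  have := congrArg (MvPolynomial.coeff (Finsupp.equivFunOnFinite.symm x)) key
  rw [mem_countVecs] at hx
  rw [coeff_hPoly, coeff_hPoly] at this
  simp only [Finsupp.coe_equivFunOnFinite_symm, hx, if_true] at this
  have h0 : (Nat.multinomial Finset.univ x : ℝ) ≠ 0 := by
    exact_mod_cast (Nat.multinomial_pos _ _).ne'
  exact mul_right_cancel₀ h0 this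

lemma powerFn_one (k n : ℕ) (π : Fin k → ℝ) (h : ∑ i, π i = 1) :
    powerFn (Fin k) n (fun _ => 1) π = 1 := by
  have h1 := Finset.sum_pow_eq_sum_piAntidiag Finset.univ π n
  rw [h, one_pow] at h1
  unfold powerFn
  refine Eq.trans ?_ h1.symm
  refine Finset.sum_congr ?_ fun x _ => by ring
  ext x
  simp [mem_countVecs, Finset.mem_piAntidiag]

lemma powerFn_affine (k n : ℕ) (φ : (Fin k → ℕ) → ℝ) (a b : ℝ) (π : Fin k → ℝ)
    (h : ∑ i, π i = 1) :
    powerFn (Fin k) n (fun x => a * φ x + b) π = a * powerFn (Fin k) n φ π + b := by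
  have h1 := powerFn_one k n π h
  have : powerFn (Fin k) n (fun x => a * φ x + b) π =
    a * powerFn (Fin k) n φ π + b * powerFn (Fin k) n (fun _ => 1) π := by
    unfold powerFn
    rw [Finset.mul_sum, Finset.mul_sum, ← Finset.sum_add_distrib]
    exact Finset.sum_congr rfl fun x _ => by ring
  rw [this, h1, mul_one]

lemma powerFn_mono (k n : ℕ) (φ ψ : (Fin k → ℕ) → ℝ) (π : Fin k → ℝ) (h : ∀ i, 0 ≤ π i)
    (hle : ∀ x ∈ countVecs (Fin k) n, φ x ≤ ψ x) :
    powerFn (Fin k) n φ π ≤ powerFn (Fin k) n ψ π := by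
  unfold powerFn
  refine Finset.sum_le_sum fun x hx => ?_
  have : 0 ≤ ∏ i, π i ^ x i := Finset.prod_nonneg fun i _ => pow_nonneg (h i) _
  have := hle x hx
  gcongr

lemma lift_castLE (k : ℕ) (p : Fin (k-1) → ℝ) (j : Fin (k-1)) :
    liftProj k p (Fin.castLE (Nat.sub_le k 1) j) = p j := by
  unfold liftProj
  rw [dif_pos (by simp)]
  rfl

lemma proj_lift (k : ℕ) (p : Fin (k-1) → ℝ) : projPoint k (liftProj k p) = p := by
  ext j; exact lift_castLE k p j

lemma sum_split (k : ℕ) (hk : 2 ≤ k) (g : Fin k → ℝ) :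
    ∑ i, g i = ∑ j : Fin (k-1), g (Fin.castLE (Nat.sub_le k 1) j) + g ⟨k-1, by omega⟩ := by
  obtain ⟨m, rfl⟩ : ∃ m, k = m + 1 := ⟨k-1, by omega⟩
  exact Fin.sum_univ_castSucc g

lemma lift_last (k : ℕ) (hk : 2 ≤ k) (p : Fin (k-1) → ℝ) :
    liftProj k p ⟨k-1, by omega⟩ = 1 - ∑ j, p j := by
  simp [liftProj]

lemma sum_lift (k : ℕ) (hk : 2 ≤ k) (p : Fin (k-1) → ℝ) : ∑ i, liftProj k p i = 1 := by
  rw [sum_split k hk, lift_last k hk]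
  simp [lift_castLE]

lemma lift_mem (k : ℕ) (hk : 2 ≤ k) {p : Fin (k-1) → ℝ} (hp : p ∈ projSimplex k) :
    liftProj k p ∈ probSimplex (Fin k) := by
  refine ⟨fun i => ?_, sum_lift k hk p⟩
  unfold liftProj
  split_ifs
  · exact hp.1 _
  · linarith [hp.2]

lemma proj_mem (k : ℕ) (hk : 2 ≤ k) {π : Fin k → ℝ} (h : π ∈ probSimplex (Fin k)) :
    projPoint k π ∈ projSimplex k := by
  refine ⟨fun i => h.1 _, ?_⟩
  have h2 := h.2
  rw [sum_split k hk] at h2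
  have := h.1 ⟨k-1, by omega⟩
  simp only [projPoint]; linarith

lemma lift_proj (k : ℕ) (hk : 2 ≤ k) {π : Fin k → ℝ} (h : π ∈ probSimplex (Fin k)) :
    liftProj k (projPoint k π) = π := by
  have h2 := h.2
  rw [sum_split k hk] at h2
  ext i
  unfold liftProj
  split_ifs with hi
  · rfl
  · have : i = ⟨k-1, by omega⟩ := by ext; simp; omega
    rw [this]; simp only [projPoint]; linarith

/-- the power function as polynomial in the projected coordinates -/
lemma exists_powerPoly (k n : ℕ) (φ : (Fin k → ℕ) → ℝ) :
    ∃ g : MvPolynomial (Fin (k-1)) ℝ, g.totalDegree ≤ n ∧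
      ∀ p, MvPolynomial.eval p g = powerFn (Fin k) n φ (liftProj k p) := by
  let L : Fin k → MvPolynomial (Fin (k-1)) ℝ := fun i =>
    if h : (i : ℕ) < k - 1 then MvPolynomial.X ⟨i, h⟩ else 1 - ∑ j, MvPolynomial.X j
  have hL : ∀ i, (L i).totalDegree ≤ 1 := by
    intro i
    simp only [L]
    split_ifs
    · simp
    · refine (MvPolynomial.totalDegree_sub _ _).trans ?_
      refine max_le (by simp) (MvPolynomial.totalDegree_finsetSum_le fun i _ => by simp)
  have hLe : ∀ p i, MvPolynomial.eval p (L i) = liftProj k p i := by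
    intro p i
    simp only [L, liftProj]
    split_ifs <;> simp
  refine ⟨∑ x ∈ countVecs (Fin k) n, MvPolynomial.C (φ x * (Nat.multinomial Finset.univ x : ℝ)) *
    ∏ i, L i ^ x i, ?_, ?_⟩
  · refine MvPolynomial.totalDegree_finsetSum_le fun x hx => ?_
    refine (MvPolynomial.totalDegree_mul _ _).trans ?_
    rw [MvPolynomial.totalDegree_C, zero_add]
    refine (MvPolynomial.totalDegree_finsetProd _ _).trans ?_
    rw [mem_countVecs] at hx
    rw [← hx]
    refine Finset.sum_le_sum fun i _ => (MvPolynomial.totalDegree_pow _ _).trans ?_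
    have := hL i
    nlinarith
  · intro p
    simp [powerFn, hLe, map_sum, map_prod]

/-- Bernstein representation -/
lemma exists_bernstein (k n : ℕ) (hk : 2 ≤ k) (g : MvPolynomial (Fin (k-1)) ℝ)
    (hg : g.totalDegree ≤ n) :
    ∃ b : (Fin k → ℕ) → ℝ, ∀ p, powerFn (Fin k) n b (liftProj k p) = MvPolynomial.eval p g := by
  let G : MvPolynomial (Fin k) ℝ := ∑ d ∈ g.support,
    MvPolynomial.rename (Fin.castLE (Nat.sub_le k 1)) (MvPolynomial.monomial d (g.coeff d)) *
      (∑ i, MvPolynomial.X i) ^ (n - d.degree)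
  have hG : G.IsHomogeneous n := by
    refine MvPolynomial.IsHomogeneous.sum _ _ _ fun d hd => ?_
    have hdn : d.degree ≤ n := (MvPolynomial.le_totalDegree hd).trans hg
    have h1 : (MvPolynomial.rename (Fin.castLE (Nat.sub_le k 1))
        (MvPolynomial.monomial d (g.coeff d))).IsHomogeneous d.degree :=
      (MvPolynomial.isHomogeneous_monomial _ rfl).rename_isHomogeneous
    have h2 : (∑ i : Fin k, (MvPolynomial.X i : MvPolynomial (Fin k) ℝ)).IsHomogeneous 1 :=
      MvPolynomial.IsHomogeneous.sum _ _ _ fun i _ => MvPolynomial.isHomogeneous_X _ _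
    have h3 := h1.mul (h2.pow (n - d.degree))
    rwa [one_mul, Nat.add_sub_cancel' hdn] at h3
  obtain ⟨b, hb⟩ := exists_of_hom k n G hG
  refine ⟨b, fun p => ?_⟩
  rw [← eval_hPoly, hb]
  conv_rhs => rw [MvPolynomial.as_sum g]
  simp only [G, map_sum, map_mul, map_pow, MvPolynomial.eval_X, sum_lift k hk p, one_pow, mul_one,
    MvPolynomial.eval_rename]
  refine Finset.sum_congr rfl fun d _ => ?_
  congr 1
  have : liftProj k p ∘ Fin.castLE (Nat.sub_le k 1) = p := funext fun j => lift_castLE k p j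
  rw [this]

/-- Nonnegativity extends from `f ≠ 0` to everything. -/
lemma nonneg_of_dense (k : ℕ) (f h : MvPolynomial (Fin (k-1)) ℝ)
    (q : Fin (k-1) → ℝ) (hq : q ∈ projSimplex k) (hfq : MvPolynomial.eval q f ≠ 0)
    (H : ∀ p ∈ projSimplex k, MvPolynomial.eval p f ≠ 0 → 0 ≤ MvPolynomial.eval p h) :
    ∀ p ∈ projSimplex k, 0 ≤ MvPolynomial.eval p h := by
  intro p hp
  let ln : ℝ → (Fin (k-1) → ℝ) := fun t i => p i + t * (q i - p i)
  let F : Polynomial ℝ := MvPolynomial.aeval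
    (fun i => Polynomial.C (p i) + Polynomial.X * Polynomial.C (q i - p i)) f
  have hF : ∀ t, F.eval t = MvPolynomial.eval (ln t) f := by
    intro t
    have : F.eval t = Polynomial.aeval t F := by rw [Polynomial.coe_aeval_eq_eval]
    rw [this]
    simp only [F]
    rw [← AlgHom.comp_apply, MvPolynomial.comp_aeval, ← MvPolynomial.coe_aeval_eq_eval]
    simp [ln]
  have hF0 : F ≠ 0 := by
    intro h0
    apply hfq
    have := hF 1
    rw [h0] at this
    simpa [ln] using this.symm
  have hfin : (F.rootSet ℝ \ {0}).Finite := (Polynomial.rootSet_finite F ℝ).subset Set.sdiff_subset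
  have hev : ∀ᶠ t in nhdsWithin (0:ℝ) (Set.Ioi 0), 0 ≤ MvPolynomial.eval (ln t) h := by
    have h1 : ∀ᶠ t in nhdsWithin (0:ℝ) (Set.Ioi 0), t ∈ (F.rootSet ℝ \ {0})ᶜ :=
      nhdsWithin_le_nhds (hfin.isClosed.isOpen_compl.mem_nhds (by simp))
    have h2 : ∀ᶠ t in nhdsWithin (0:ℝ) (Set.Ioi 0), t < 1 :=
      nhdsWithin_le_nhds (Iio_mem_nhds one_pos)
    filter_upwards [h1, h2, self_mem_nhdsWithin] with t ht1 ht2 ht3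
    have ht0 : 0 < t := ht3
    apply H
    · constructor
      · intro i
        have a := hp.1 i
        have b := hq.1 i
        simp only [ln]; nlinarith
      · have a := hp.2
        have b := hq.2
        simp only [ln]
        rw [Finset.sum_add_distrib, ← Finset.mul_sum, Finset.sum_sub_distrib]
        nlinarith
    · rw [← hF]
      intro h0
      apply ht1
      refine ⟨?_, ht0.ne'⟩
      rw [Polynomial.mem_rootSet]
      exact ⟨hF0, by rw [Polynomial.coe_aeval_eq_eval]; exact h0⟩
  have hc : Continuous fun t => MvPolynomial.eval (ln t) h := by
    refine (MvPolynomial.continuous_eval h).comp ?_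
    simp only [ln]; fun_prop
  have ht := (hc.tendsto 0).mono_left (nhdsWithin_le_nhds (s := Set.Ioi (0:ℝ)))
  have := ge_of_tendsto ht hev
  simpa [ln] using this

/-- semialgebraic null hypothesis `{f ≤ 0}` whose relative boundary has
vanishing ideal `⟨f⟩`: thresholds equal `deg f`, power functions factor as `f·h + α`,
and at sample size `deg f` the test with power `c_α·f + α` is the unique UMPU test. -/
theorem stmt_14 (k : ℕ) (hk : 2 ≤ k)
    (f : MvPolynomial (Fin (k - 1)) ℝ)
    (Pt0 : Set (Fin (k - 1) → ℝ))
    (hPt0 : Pt0 = {π' ∈ projSimplex k | MvPolynomial.eval π' f ≤ 0})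
    (P0 : Set (Fin k → ℝ)) (hP0 : P0 = liftProj k '' Pt0)
    (hne : P0.Nonempty) (hneq : P0 ≠ probSimplex (Fin k))
    (bd : Set (Fin (k - 1) → ℝ))
    (hbd : bd = Pt0 ∩ closure (projSimplex k \ Pt0))
    (hVI : ∀ h : MvPolynomial (Fin (k - 1)) ℝ,
      (∀ π' ∈ bd, MvPolynomial.eval π' h = 0) ↔ h ∈ Ideal.span {f}) :
    (∀ n : ℕ, n < f.totalDegree →
      ¬ ∃ φ, IsTest (Fin k) n φ ∧ IsNTUB (Fin k) n P0 φ) ∧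
    (∃ φ, IsTest (Fin k) f.totalDegree φ ∧ IsSUB (Fin k) f.totalDegree P0 φ) ∧
    (∀ n : ℕ, ∀ α : ℝ, ∀ φ, IsTest (Fin k) n φ → IsNTUB (Fin k) n P0 φ →
      HasSize (Fin k) n P0 α φ →
      ∃ h : MvPolynomial (Fin (k - 1)) ℝ,
        h.totalDegree ≤ n - f.totalDegree ∧
        (∀ π' ∈ projSimplex k, 0 ≤ MvPolynomial.eval π' h) ∧
        (∀ π' : Fin (k - 1) → ℝ,
          powerFn (Fin k) n φ (liftProj k π') =
            MvPolynomial.eval π' f * MvPolynomial.eval π' h + α) ∧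
        (IsSUB (Fin k) n P0 φ →
          ∀ π' ∈ projSimplex k \ Pt0, 0 < MvPolynomial.eval π' h)) ∧
    (∀ α : ℝ, α ∈ Set.Ioo (0 : ℝ) 1 →
      ∃ cα : ℝ,
        IsGreatest {c : ℝ | 0 < c ∧ ∃ φ, IsTest (Fin k) f.totalDegree φ ∧
          ∀ π ∈ probSimplex (Fin k),
            powerFn (Fin k) f.totalDegree φ π =
              c * MvPolynomial.eval (projPoint k π) f + α} cα ∧
        (∀ φ, IsTest (Fin k) f.totalDegree φ →
          IsNTUB (Fin k) f.totalDegree P0 φ →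
          HasSize (Fin k) f.totalDegree P0 α φ →
          ∃ c : ℝ, 0 < c ∧ c ≤ cα ∧ ∀ π ∈ probSimplex (Fin k),
            powerFn (Fin k) f.totalDegree φ π =
              c * MvPolynomial.eval (projPoint k π) f + α) ∧
        (∀ φ, IsTest (Fin k) f.totalDegree φ →
          (∀ π ∈ probSimplex (Fin k),
            powerFn (Fin k) f.totalDegree φ π =
              cα * MvPolynomial.eval (projPoint k π) f + α) →
          IsSUB (Fin k) f.totalDegree P0 φ ∧
          IsUMPU (Fin k) f.totalDegree P0 α φ ∧
          ∀ ψ, IsTest (Fin k) f.totalDegree ψ →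
            IsUMPU (Fin k) f.totalDegree P0 α ψ →
            ∀ x ∈ countVecs (Fin k) f.totalDegree, ψ x = φ x)) := by
  have hlift : ∀ p, liftProj k p ∈ P0 ↔ p ∈ Pt0 := by
    intro p
    rw [hP0]
    constructor
    · rintro ⟨q, hq, e⟩
      have := congrArg (projPoint k) e
      rw [proj_lift, proj_lift] at this
      exact this ▸ hq
    · exact fun h => ⟨p, h, rfl⟩
  have hPt : ∀ p ∈ Pt0, p ∈ projSimplex k ∧ MvPolynomial.eval p f ≤ 0 := by
    intro p hp; rw [hPt0] at hp; exact hp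
  have hA' : ∀ p ∈ projSimplex k \ Pt0, liftProj k p ∈ probSimplex (Fin k) \ P0 := by
    intro p hp
    exact ⟨lift_mem k hk hp.1, fun h => hp.2 ((hlift p).1 h)⟩
  have hA : ∀ π ∈ probSimplex (Fin k) \ P0, ∃ p ∈ projSimplex k \ Pt0, liftProj k p = π := by
    intro π hπ
    refine ⟨projPoint k π, ⟨proj_mem k hk hπ.1, fun h => ?_⟩, lift_proj k hk hπ.1⟩
    have := (hlift _).2 h
    rw [lift_proj k hk hπ.1] at this
    exact hπ.2 this
  have hB : ∀ π ∈ P0, ∃ p ∈ Pt0, liftProj k p = π := by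
    intro π hπ; rw [hP0] at hπ; exact hπ
  have hpos : ∀ p ∈ projSimplex k \ Pt0, 0 < MvPolynomial.eval p f := by
    intro p hp
    by_contra hc
    apply hp.2
    rw [hPt0]; exact ⟨hp.1, not_lt.1 hc⟩
  obtain ⟨q, hq⟩ : ∃ q, q ∈ projSimplex k \ Pt0 := by
    by_contra hc
    push Not at hc
    apply hneq
    apply Set.Subset.antisymm
    · intro π hπ
      obtain ⟨p, hp, rfl⟩ := hB π hπ
      exact lift_mem k hk (hPt p hp).1
    · intro π hπ
      by_contra h
      obtain ⟨p, hp, -⟩ := hA π ⟨hπ, h⟩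
      exact hc p hp
  have hfq := hpos q hq
  have hf0 : f ≠ 0 := by
    rintro rfl
    simp at hfq
  obtain ⟨p0, hp0⟩ : ∃ p, p ∈ Pt0 := by
    obtain ⟨π, hπ⟩ := hne
    obtain ⟨p, hp, -⟩ := hB π hπ
    exact ⟨p, hp⟩
  have hfbd : ∀ b ∈ bd, MvPolynomial.eval b f = 0 :=
    (hVI f).2 (Ideal.mem_span_singleton_self f)
  obtain ⟨b, hb⟩ : ∃ b, b ∈ bd := by
    by_contra hc
    push Not at hc
    have h1 := (hVI 1).1 (fun p hp => absurd hp (hc p))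
    rw [Ideal.mem_span_singleton] at h1
    obtain ⟨g, hg⟩ := h1
    have hg0 : g ≠ 0 := by rintro rfl; simp at hg
    have h2 := MvPolynomial.totalDegree_mul_of_isDomain hf0 hg0
    rw [← hg, MvPolynomial.totalDegree_one] at h2
    have h3 : f.totalDegree = 0 := by omega
    rw [MvPolynomial.totalDegree_eq_zero_iff_eq_C] at h3
    have h4 := (hPt p0 hp0).2
    rw [h3, MvPolynomial.eval_C] at h4 hfq
    linarith
  have hfb := hfbd b hb
  have hbP : b ∈ Pt0 := by rw [hbd] at hb; exact hb.1
  have core : ∀ n φ, Unbiased (Fin k) n P0 φ → ∃ (α : ℝ) (h : MvPolynomial (Fin (k - 1)) ℝ),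
      (h = 0 ∨ f.totalDegree + h.totalDegree ≤ n) ∧
      (∀ p, powerFn (Fin k) n φ (liftProj k p) =
        MvPolynomial.eval p f * MvPolynomial.eval p h + α) ∧
      IsGreatest (powerFn (Fin k) n φ '' P0) α ∧
      (∀ p ∈ projSimplex k, 0 ≤ MvPolynomial.eval p h) := by
    intro n φ hφ
    obtain ⟨g, hgd, hge⟩ := exists_powerPoly k n φ
    have hup : ∀ b ∈ bd, ∀ p ∈ Pt0, MvPolynomial.eval p g ≤ MvPolynomial.eval b g := by
      intro b hb p hp
      rw [hbd] at hb
      have hcl : IsClosed {x | MvPolynomial.eval p g ≤ MvPolynomial.eval x g} :=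
        isClosed_le continuous_const (MvPolynomial.continuous_eval g)
      have hsub : projSimplex k \ Pt0 ⊆ {x | MvPolynomial.eval p g ≤ MvPolynomial.eval x g} := by
        intro x hx
        simp only [Set.mem_ofPred_eq, hge]
        exact hφ _ ((hlift p).2 hp) _ (hA' x hx)
      exact closure_minimal hsub hcl hb.2
    have hbd' : ∀ b ∈ bd, b ∈ Pt0 := by intro b hb; rw [hbd] at hb; exact hb.1
    have hz := (hVI (g - MvPolynomial.C (MvPolynomial.eval b g))).1 (by
      intro b' hb'
      have h1 := hup b hb b' (hbd' b' hb')
      have h2 := hup b' hb' b hbP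
      simp; linarith)
    rw [Ideal.mem_span_singleton] at hz
    obtain ⟨h, hh⟩ := hz
    have hev : ∀ p, powerFn (Fin k) n φ (liftProj k p) =
        MvPolynomial.eval p f * MvPolynomial.eval p h + MvPolynomial.eval b g := by
      intro p
      have := congrArg (MvPolynomial.eval p) hh
      simp at this
      rw [← hge]; linarith
    refine ⟨MvPolynomial.eval b g, h, ?_, hev, ⟨?_, ?_⟩, ?_⟩
    · by_cases h0 : h = 0
      · exact Or.inl h0
      · right
        rw [← MvPolynomial.totalDegree_mul_of_isDomain hf0 h0, ← hh]
        refine (MvPolynomial.totalDegree_sub _ _).trans ?_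
        simpa using hgd
    · exact ⟨_, (hlift b).2 hbP, (hge b).symm⟩
    · rintro _ ⟨π, hπ, rfl⟩
      obtain ⟨p, hp, rfl⟩ := hB π hπ
      rw [← hge]; exact hup b hb p hp
    · refine nonneg_of_dense k f h q hq.1 hfq.ne' ?_
      intro p hp hfp
      have he := hev p
      by_cases hpP : p ∈ Pt0
      · have h1 := (hPt p hpP).2
        have h2 := hup b hb p hpP
        rw [hge] at h2
        have h3 : MvPolynomial.eval p f < 0 := lt_of_le_of_ne h1 hfp
        by_contra hc
        push Not at hc
        have := mul_pos_of_neg_of_neg h3 hc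
        linarith
      · have h3 := hpos p ⟨hp, hpP⟩
        have h2 := hφ _ ((hlift b).2 hbP) _ (hA' p ⟨hp, hpP⟩)
        rw [← hge b] at h2
        by_contra hc
        push Not at hc
        have := mul_neg_of_pos_of_neg h3 hc
        linarith
  -- the case of sample size `deg f`
  have core' : ∀ φ, Unbiased (Fin k) f.totalDegree P0 φ → ∃ α c : ℝ, 0 ≤ c ∧
      (∀ π ∈ probSimplex (Fin k), powerFn (Fin k) f.totalDegree φ π =
        c * MvPolynomial.eval (projPoint k π) f + α) ∧
      IsGreatest (powerFn (Fin k) f.totalDegree φ '' P0) α := by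
    intro φ hφ
    obtain ⟨α, h, hd, hev, hG, hnn⟩ := core _ φ hφ
    have hd0 : h.totalDegree = 0 := by
      rcases hd with rfl | hd
      · simp
      · omega
    rw [MvPolynomial.totalDegree_eq_zero_iff_eq_C] at hd0
    refine ⟨α, MvPolynomial.coeff 0 h, ?_, ?_, hG⟩
    · have := hnn q hq.1
      rwa [hd0, MvPolynomial.eval_C] at this
    · intro π hπ
      have := hev (projPoint k π)
      rw [lift_proj k hk hπ] at this
      rw [this]
      conv_lhs => rw [hd0, MvPolynomial.eval_C]
      ring
  obtain ⟨B, hBe⟩ := exists_bernstein k f.totalDegree hk f le_rfl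
  have hBp : ∀ π ∈ probSimplex (Fin k), powerFn (Fin k) f.totalDegree B π =
      MvPolynomial.eval (projPoint k π) f := by
    intro π hπ
    rw [← hBe, lift_proj k hk hπ]
  have hcB : ∀ c α : ℝ, ∀ π ∈ probSimplex (Fin k),
      powerFn (Fin k) f.totalDegree (fun x => c * B x + α) π =
        c * MvPolynomial.eval (projPoint k π) f + α := by
    intro c α π hπ
    rw [powerFn_affine _ _ _ _ _ _ hπ.2, hBp π hπ]
  have hSUB : ∀ c α : ℝ, 0 < c → ∀ φ, (∀ π ∈ probSimplex (Fin k),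
      powerFn (Fin k) f.totalDegree φ π = c * MvPolynomial.eval (projPoint k π) f + α) →
      (∀ π ∈ P0, powerFn (Fin k) f.totalDegree φ π ≤ α) ∧
      ∀ π ∈ probSimplex (Fin k) \ P0, α < powerFn (Fin k) f.totalDegree φ π := by
    intro c α hc φ hφ
    constructor
    · intro π hπ
      obtain ⟨p, hp, rfl⟩ := hB π hπ
      rw [hφ _ (lift_mem k hk (hPt p hp).1), proj_lift]
      have := (hPt p hp).2
      nlinarith
    · intro π hπ
      obtain ⟨p, hp, rfl⟩ := hA π hπ
      rw [hφ _ hπ.1, proj_lift]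
      have := hpos p hp
      nlinarith
  have hsmall : ∀ α : ℝ, α ∈ Set.Ioo (0:ℝ) 1 → ∃ c : ℝ, 0 < c ∧
      IsTest (Fin k) f.totalDegree (fun x => c * B x + α) := by
    intro α hα
    set M := ∑ x ∈ countVecs (Fin k) f.totalDegree, |B x| + 1 with hM
    have hM0 : 0 < M := by positivity
    have hε : 0 < min α (1 - α) := lt_min hα.1 (by linarith [hα.2])
    refine ⟨min α (1 - α) / M, div_pos hε hM0, ?_⟩
    intro x hx
    have h1 : |B x| ≤ M := by
      have := Finset.single_le_sum (f := fun x => |B x|) (fun _ _ => abs_nonneg _) hx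
      linarith
    have h2 : |min α (1 - α) / M * B x| ≤ min α (1 - α) := by
      rw [abs_mul, abs_of_pos (div_pos hε hM0), div_mul_eq_mul_div, div_le_iff₀ hM0]
      gcongr
    rw [abs_le] at h2
    have h3 := min_le_left α (1 - α)
    have h4 := min_le_right α (1 - α)
    constructor <;> simp only <;> linarith [h2.1, h2.2]
  refine ⟨?_, ?_, ?_, ?_⟩
  · rintro n hn ⟨φ, -, hφ, π, hπ, π', hπ', hne'⟩
    obtain ⟨α, h, hd, hev, -, -⟩ := core n φ hφ
    rcases hd with rfl | hd
    · apply hne'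
      have e1 := hev (projPoint k π)
      have e2 := hev (projPoint k π')
      rw [lift_proj k hk hπ] at e1
      rw [lift_proj k hk hπ'] at e2
      simp at e1 e2
      rw [e1, e2]
    · omega
  · obtain ⟨c, hc, ht⟩ := hsmall (1/2) (by constructor <;> norm_num)
    refine ⟨_, ht, ?_⟩
    obtain ⟨h1, h2⟩ := hSUB c (1/2) hc _ (hcB c (1/2))
    intro π0 h0 πA hA1
    exact (h1 _ h0).trans_lt (h2 _ hA1)
  · intro n α φ ht hφ hsize
    obtain ⟨α', h, hd, hev, hG, hnn⟩ := core n φ hφ.1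
    obtain rfl : α' = α := hG.isLUB.unique hsize
    refine ⟨h, ?_, hnn, hev, ?_⟩
    · rcases hd with rfl | hd
      · simp
      · omega
    · intro hs p hp
      have h1 := hs _ ((hlift b).2 hbP) _ (hA' p hp)
      rw [hev, hev, hfb] at h1
      have h2 := hpos p hp
      by_contra hc
      push Not at hc
      have := mul_nonpos_of_nonneg_of_nonpos h2.le hc
      linarith
  · intro α hα
    -- characterisation of admissible c
    have hchar : ∀ c : ℝ, (∃ φ, IsTest (Fin k) f.totalDegree φ ∧
          ∀ π ∈ probSimplex (Fin k), powerFn (Fin k) f.totalDegree φ π =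
              c * MvPolynomial.eval (projPoint k π) f + α) ↔
        IsTest (Fin k) f.totalDegree (fun x => c * B x + α) := by
      intro c
      constructor
      · rintro ⟨φ, ht, hφ⟩ x hx
        have := powerFn_unique k f.totalDegree hk φ (fun x => c * B x + α) (fun π hπ => by
          rw [hφ π hπ, hcB c α π hπ]) x hx
        simp only at this ⊢
        rw [← this]; exact ht x hx
      · exact fun ht => ⟨_, ht, hcB c α⟩
    obtain ⟨ε, hε, htε⟩ := hsmall α hα
    obtain ⟨x0, hx0, hBx0⟩ : ∃ x ∈ countVecs (Fin k) f.totalDegree, 0 < B x := by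
      by_contra hc
      push Not at hc
      have hm := powerFn_mono k f.totalDegree B (fun _ => 0) (liftProj k q)
        (lift_mem k hk hq.1).1 hc
      rw [hBe] at hm
      simp [powerFn] at hm
      linarith
    obtain ⟨cα, hcα⟩ : ∃ c, IsGreatest {c : ℝ | ε ≤ c ∧
        IsTest (Fin k) f.totalDegree (fun x => c * B x + α)} c := by
      refine IsCompact.exists_isGreatest ?_ ⟨ε, le_rfl, htε⟩
      have hcl : IsClosed {c : ℝ | ε ≤ c ∧
          IsTest (Fin k) f.totalDegree (fun x => c * B x + α)} := by
        simp only [IsTest, Set.ofPred_and, Set.ofPred_forall]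
        refine (isClosed_le continuous_const continuous_id).inter ?_
        refine isClosed_iInter fun x => isClosed_iInter fun _ => ?_
        exact (isClosed_le (by fun_prop) (by fun_prop)).inter
          (isClosed_le (by fun_prop) (by fun_prop))
      refine (isCompact_Icc (a := ε) (b := (1 - α) / B x0)).of_isClosed_subset hcl ?_
      rintro c ⟨h1, h2⟩
      refine ⟨h1, ?_⟩
      rw [le_div_iff₀ hBx0]
      have := (h2 x0 hx0).2
      simp only at this
      linarith
    have hcpos : 0 < cα := hε.trans_le hcα.1.1
    have hmax : ∀ c, IsTest (Fin k) f.totalDegree (fun x => c * B x + α) → c ≤ cα := by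
      intro c hc
      rcases le_total ε c with h | h
      · exact hcα.2 ⟨h, hc⟩
      · exact h.trans hcα.1.1
    refine ⟨cα, ⟨⟨hcpos, (hchar cα).2 hcα.1.2⟩, ?_⟩, ?_, ?_⟩
    · rintro c ⟨-, hc⟩
      exact hmax c ((hchar c).1 hc)
    · intro φ ht hφ hsize
      obtain ⟨α', c, hc, hev, hG⟩ := core' φ hφ.1
      obtain rfl : α' = α := hG.isLUB.unique hsize
      refine ⟨c, lt_of_le_of_ne hc ?_, hmax c ((hchar c).1 ⟨φ, ht, hev⟩), hev⟩
      rintro rfl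
      obtain ⟨-, π, hπ, π', hπ', hne'⟩ := hφ
      apply hne'
      rw [hev π hπ, hev π' hπ']; ring
    · intro φ ht hφ
      obtain ⟨h1, h2⟩ := hSUB cα α hcpos φ hφ
      have hU : IsUMPU (Fin k) f.totalDegree P0 α φ := by
        refine ⟨h1, fun π0 h0 πA hA1 => ((h1 _ h0).trans_lt (h2 _ hA1)).le, ?_⟩
        intro ψ htψ hlψ huψ πA hA1
        obtain ⟨α', c, hc, hev, hG⟩ := core' ψ huψ
        have hα' : α' ≤ α := by
          obtain ⟨π, hπ, e⟩ := hG.1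
          rw [← e]; exact hlψ π hπ
        have hα1 : 0 < 1 - α' := by linarith [hα.2]
        set s := (α - α') / (1 - α') with hs
        have hs0 : 0 ≤ s := div_nonneg (by linarith) hα1.le
        have hs1 : s ≤ 1 := by rw [hs, div_le_one hα1]; linarith [hα.2]
        have hse : s * (1 - α') = α - α' := div_mul_cancel₀ _ hα1.ne'
        have hcc : (1 - s) * c ≤ cα := by
          apply hmax
          rw [← hchar]
          refine ⟨fun x => (1 - s) * ψ x + s, ?_, ?_⟩
          · intro x hx
            obtain ⟨u, v⟩ := htψ x hx
            constructor <;> simp only <;> nlinarith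
          · intro π hπ
            rw [powerFn_affine _ _ _ _ _ _ hπ.2, hev π hπ]
            linear_combination hse
        have hψ1 : powerFn (Fin k) f.totalDegree ψ πA ≤ 1 := by
          rw [← powerFn_one k f.totalDegree πA hA1.1.2]
          exact powerFn_mono _ _ _ _ _ hA1.1.1 fun x hx => (htψ x hx).2
        rw [hφ _ hA1.1]
        rw [hev _ hA1.1] at hψ1 ⊢
        obtain ⟨p, hp, rfl⟩ := hA πA hA1
        rw [proj_lift] at hψ1 ⊢
        have hfp := hpos p hp
        have e1 := mul_le_mul_of_nonneg_right hcc hfp.le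
        have e2 := mul_le_mul_of_nonneg_left hψ1 hs0
        nlinarith
      refine ⟨fun π0 h0 πA hA1 => (h1 _ h0).trans_lt (h2 _ hA1), hU, ?_⟩
      intro ψ htψ hUψ
      obtain ⟨α', c, hc, hev, hG⟩ := core' ψ hUψ.2.1
      have heq : ∀ π ∈ probSimplex (Fin k) \ P0,
          powerFn (Fin k) f.totalDegree ψ π = powerFn (Fin k) f.totalDegree φ π := by
        intro π hπ
        exact le_antisymm (hU.2.2 ψ htψ hUψ.1 hUψ.2.1 π hπ) (hUψ.2.2 φ ht hU.1 hU.2.1 π hπ)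
      have hpt : ∀ p ∈ projSimplex k \ Pt0, c * MvPolynomial.eval p f + α' =
          cα * MvPolynomial.eval p f + α := by
        intro p hp
        have := heq _ (hA' p hp)
        rwa [hev _ (hA' p hp).1, hφ _ (hA' p hp).1, proj_lift] at this
      have hcl : IsClosed {p | c * MvPolynomial.eval p f + α' =
          cα * MvPolynomial.eval p f + α} := by
        have := MvPolynomial.continuous_eval f
        exact isClosed_eq (by fun_prop) (by fun_prop)
      have hbe : c * MvPolynomial.eval b f + α' = cα * MvPolynomial.eval b f + α := by
        rw [hbd] at hb
        exact closure_minimal hpt hcl hb.2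
      rw [hfb] at hbe
      have hαα : α' = α := by linarith
      have hcc : c = cα := by
        have := hpt q hq
        rw [hαα] at this
        exact mul_right_cancel₀ hfq.ne' (add_right_cancel this)
      apply powerFn_unique k _ hk
      intro π hπ
      rw [hev π hπ, hφ π hπ, hαα, hcc]
end

section
/- Let p, q ≥ 2 and 2 ≤ r ≤ min(p,q), let k = p·q, and regard a point π of Δ_{pq-1} as a p×q real matrix (π_{ij}). Let P0 = {π ∈ Δ_{pq-1} : rank(π) < r}, where rank is the rank of the real matrix. Then the NTUB and SUB unbiasedness thresholds of P0 both equal 2r: there is no NTUB test of P0 of any sample size n < 2r, and for every α ∈ (0,1) there exists c > 0 such that the function π ↦ c·∑_{I,J} det(π_{I,J})² + α on Δ_{pq-1} — the sum over all r-element subsets I of the rows and J of the columns, with π_{I,J} the corresponding r×r submatrix — is the power function of a strictly unbiased test of P0 of sample size 2r with size α. -/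
open Finset

/-- The squared determinant of the `r × r` submatrix of the `p × q` matrix `π` with rows `s`
and columns `t` (`0` if `s` or `t` does not have `r` elements). -/
noncomputable def minorDetSq (p q r : ℕ) (π : Fin p × Fin q → ℝ)
    (s : Finset (Fin p)) (t : Finset (Fin q)) : ℝ :=
  if h : s.card = r ∧ t.card = r then
    (Matrix.det (Matrix.of fun a b : Fin r =>
      π ((s.orderIsoOfFin h.1 a : Fin p), (t.orderIsoOfFin h.2 b : Fin q)))) ^ 2
  else 0


theorem aux_coeff {σ : Type} [Fintype σ] [DecidableEq σ] (P : MvPolynomial σ ℝ) (i : σ)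
    (h0 : ∀ t : σ → ℝ, (∀ j, 0 < t j) → MvPolynomial.eval (Function.update t i 0) P = 0)
    (h1 : ∀ t : σ → ℝ, (∀ j, 0 < t j) →
      ∀ᶠ x in nhds (0:ℝ), 0 ≤ MvPolynomial.eval (Function.update t i x) P)
    (m : σ →₀ ℕ) (hm : m i ≤ 1) : MvPolynomial.coeff m P = 0 := by
  classical
  let Q : ℕ → MvPolynomial σ ℝ := fun k =>
    ∑ d ∈ P.support with d i = k, MvPolynomial.monomial (d.erase i) (P.coeff d)
  let p : (σ → ℝ) → Polynomial ℝ := fun t =>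
    ∑ d ∈ P.support, Polynomial.C (P.coeff d * ∏ j ∈ univ.erase i, t j ^ d j) * Polynomial.X ^ (d i)
  have hp : ∀ t x, (p t).eval x = MvPolynomial.eval (Function.update t i x) P := by
    intro t x
    rw [MvPolynomial.eval_eq']
    simp only [p, Polynomial.eval_finsetSum, Polynomial.eval_mul, Polynomial.eval_C,
      Polynomial.eval_pow, Polynomial.eval_X]
    refine Finset.sum_congr rfl fun d _ => ?_
    rw [← Finset.mul_prod_erase univ _ (Finset.mem_univ i), Function.update_self]
    have : ∏ j ∈ univ.erase i, Function.update t i x j ^ d j = ∏ j ∈ univ.erase i, t j ^ d j :=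
      Finset.prod_congr rfl fun j hj => by
        rw [Function.update_of_ne (Finset.ne_of_mem_erase hj)]
    rw [this]; ring
  have hq : ∀ t k, (p t).coeff k = MvPolynomial.eval t (Q k) := by
    intro t k
    simp only [p, Q, Polynomial.finsetSum_coeff, Polynomial.coeff_C_mul, Polynomial.coeff_X_pow,
      map_sum, Finset.sum_filter]
    refine Finset.sum_congr rfl fun d _ => ?_
    by_cases h : d i = k
    · rw [if_pos h, if_pos h.symm, mul_one, MvPolynomial.eval_monomial]
      congr 1
      rw [Finsupp.prod_fintype _ _ (by simp), ← Finset.mul_prod_erase univ _ (Finset.mem_univ i)]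
      simp only [Finsupp.erase_same, pow_zero, one_mul]
      exact Finset.prod_congr rfl fun j hj => by
        rw [Finsupp.erase_ne (Finset.ne_of_mem_erase hj)]
    · rw [if_neg h, if_neg (fun h' => h h'.symm), mul_zero, map_zero]
  have key : ∀ k ≤ 1, Q k = 0 := by
    intro k hk
    refine MvPolynomial.funext_set (fun _ => Set.Ioi (0:ℝ)) (fun _ => Set.Ioi_infinite 0) ?_
    intro t ht
    have ht' : ∀ j, 0 < t j := fun j => ht j trivial
    rw [← hq, map_zero]
    have e0 : (p t).eval 0 = 0 := by rw [hp]; exact h0 t ht'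
    interval_cases k
    · rw [Polynomial.coeff_zero_eq_eval_zero]; exact e0
    · have hl : IsLocalMin (fun x => (p t).eval x) 0 := by
        filter_upwards [h1 t ht'] with x hx
        rw [e0, hp]; exact hx
      have := hl.deriv_eq_zero
      rw [Polynomial.deriv, ← Polynomial.coeff_zero_eq_eval_zero, Polynomial.coeff_derivative] at this
      simpa using this
  have hQ : (Q (m i)).coeff (m.erase i) = P.coeff m := by
    simp only [Q, MvPolynomial.coeff_sum, MvPolynomial.coeff_monomial]
    by_cases hs : m ∈ P.support
    · rw [Finset.sum_eq_single m]
      · simp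
      · intro d hd hne
        rw [if_neg]
        intro he
        apply hne
        have h2 := (Finset.mem_filter.1 hd).2
        ext j
        by_cases hj : j = i
        · rw [hj, h2]
        · have := DFunLike.congr_fun he j
          rwa [Finsupp.erase_ne hj, Finsupp.erase_ne hj] at this
      · intro h; exact (h (Finset.mem_filter.2 ⟨hs, rfl⟩)).elim
    · rw [MvPolynomial.notMem_support_iff.1 hs]
      refine Finset.sum_eq_zero fun d hd => ?_
      rw [if_neg]
      intro he
      have h2 := (Finset.mem_filter.1 hd).2
      have : d = m := by
        ext j
        by_cases hj : j = i
        · rw [hj, h2]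
        · have := DFunLike.congr_fun he j
          rwa [Finsupp.erase_ne hj, Finsupp.erase_ne hj] at this
      exact hs (this ▸ (Finset.mem_filter.1 hd).1)
  rw [← hQ, key _ hm, MvPolynomial.coeff_zero]

theorem aux_eval {σ τ : Type} (g : σ → MvPolynomial τ ℝ) (P : MvPolynomial σ ℝ) (t : τ → ℝ) :
    MvPolynomial.eval t (MvPolynomial.aeval g P) =
      MvPolynomial.eval (fun e => MvPolynomial.eval t (g e)) P := by
  induction P using MvPolynomial.induction_on with
  | C a => simp
  | add p q hp hq => simp only [map_add, hp, hq]
  | mul_X p i hp => simp only [map_mul, hp, MvPolynomial.aeval_X, MvPolynomial.eval_X]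

theorem aux_H0 {s n : ℕ} (hn : n < 2 * s) (H : MvPolynomial (Fin s) ℝ) (hH : H.IsHomogeneous n)
    (h0 : ∀ i, ∀ t : Fin s → ℝ, (∀ j, 0 < t j) →
      MvPolynomial.eval (Function.update t i 0) H = 0)
    (h1 : ∀ i, ∀ t : Fin s → ℝ, (∀ j, 0 < t j) →
      ∀ᶠ x in nhds (0:ℝ), 0 ≤ MvPolynomial.eval (Function.update t i x) H) : H = 0 := by
  ext m
  rw [MvPolynomial.coeff_zero]
  by_contra hne
  have hdeg := hH hne
  have hex : ∃ i, m i ≤ 1 := by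
    by_contra hcon
    push Not at hcon
    have : 2 * s ≤ ∑ i, m i := by
      calc 2 * s = ∑ i : Fin s, 2 := by simp [mul_comm]
        _ ≤ _ := Finset.sum_le_sum fun i _ => hcon i
    rw [Finsupp.weight_apply, Finsupp.sum_fintype _ _ (by simp)] at hdeg
    simp at hdeg
    omega
  obtain ⟨i, hi⟩ := hex
  exact hne (aux_coeff H i (h0 i) (h1 i) m hi)

theorem aux_pos {p q s n : ℕ} (hs : 1 ≤ s) (hn : n < 2 * (s + 1))
    (P : MvPolynomial (Fin p × Fin q) ℝ) (hP : P.IsHomogeneous n)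
    (hpos : ∀ A : Fin p × Fin q → ℝ, (∀ e, 0 < A e) → 0 ≤ MvPolynomial.eval A P)
    (hv : ∀ (U : Fin p → Fin s → ℝ) (V : Fin s → Fin q → ℝ),
      (∀ i k, 0 < U i k) → (∀ k j, 0 < V k j) →
      MvPolynomial.eval (fun e => ∑ k, U e.1 k * V k e.2) P = 0)
    (U : Fin p → Fin (s+1) → ℝ) (V : Fin (s+1) → Fin q → ℝ)
      (hU : ∀ i k, 0 < U i k) (hV : ∀ k j, 0 < V k j) :
      MvPolynomial.eval (fun e => ∑ k, U e.1 k * V k e.2) P = 0 := by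
  classical
  obtain ⟨g, hg⟩ : ∃ g : Fin p × Fin q → MvPolynomial (Fin (s+1)) ℝ, g = fun e => 
    ∑ k, MvPolynomial.C (U e.1 k * V k e.2) * MvPolynomial.X k := ⟨_, rfl⟩
  have hg1 : ∀ e, (g e).IsHomogeneous 1 := by
    intro e
    rw [hg]
    refine MvPolynomial.IsHomogeneous.sum _ _ _ fun k _ => ?_
    simpa using (MvPolynomial.isHomogeneous_C (Fin (s+1)) (U e.1 k * V k e.2)).mul
      (MvPolynomial.isHomogeneous_X ℝ k)
  have hge : ∀ t e, MvPolynomial.eval t (g e) = ∑ k, U e.1 k * V k e.2 * t k := by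
    intro t e
    simp [hg]
  have hH : ∀ t, MvPolynomial.eval t (MvPolynomial.aeval g P) =
        MvPolynomial.eval (fun e => ∑ k, U e.1 k * V k e.2 * t k) P := by
    intro t
    rw [aux_eval]
    congr 2
    ext e
    exact hge t e
  have hHh : (MvPolynomial.aeval g P : MvPolynomial (Fin (s+1)) ℝ).IsHomogeneous n := by
    have := hP.aeval g hg1
    rwa [one_mul] at this
  have H0 := aux_H0 hn _ hHh ?_ ?_
  · have := hH (fun _ => 1)
    rw [H0, map_zero] at this
    simpa using this.symm
  · intro i t ht
    rw [hH]
    refine Eq.trans ?_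
      (hv (fun a k => U a (i.succAbove k)) (fun k b => V (i.succAbove k) b * t (i.succAbove k))
      (fun _ _ => hU _ _) (fun _ _ => mul_pos (hV _ _) (ht _)))
    congr 2
    ext e
    rw [Fin.sum_univ_succAbove _ i]
    simp [mul_assoc]
  · intro i t ht
    have : ∀ e : Fin p × Fin q, ∀ᶠ x in nhds (0:ℝ),
        0 < ∑ k, U e.1 k * V k e.2 * Function.update t i x k := by
      intro e
      have hc : Continuous fun x : ℝ => ∑ k, U e.1 k * V k e.2 * Function.update t i x k := by
        refine continuous_finsetSum _ fun k _ => ?_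
        refine continuous_const.mul ?_
        have hu : Continuous fun x : ℝ => Function.update t i x :=
          continuous_const.update i continuous_id
        exact (continuous_apply k).comp hu
      refine hc.continuousAt.eventually_const_lt ?_
      beta_reduce
      rw [Fin.sum_univ_succAbove _ i]
      simp only [Function.update_self, mul_zero, zero_add, ne_eq, Fin.succAbove_ne,
        not_false_eq_true, Function.update_of_ne]
      haveI : Nonempty (Fin s) := ⟨⟨0, hs⟩⟩
      exact Finset.sum_pos (fun k _ => mul_pos (mul_pos (hU _ _) (hV _ _)) (ht _))
        Finset.univ_nonempty
    filter_upwards [Filter.eventually_all.2 this] with x hx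
    rw [hH]
    exact hpos _ hx

theorem aux_iter {p q s n : ℕ} (hs : 1 ≤ s) (hn : n < 2 * (s + 1))
    (P : MvPolynomial (Fin p × Fin q) ℝ) (hP : P.IsHomogeneous n)
    (hpos : ∀ A : Fin p × Fin q → ℝ, (∀ e, 0 < A e) → 0 ≤ MvPolynomial.eval A P)
    (hv : ∀ (U : Fin p → Fin s → ℝ) (V : Fin s → Fin q → ℝ),
      (∀ i k, 0 < U i k) → (∀ k j, 0 < V k j) →
      MvPolynomial.eval (fun e => ∑ k, U e.1 k * V k e.2) P = 0)
    (S : ℕ) (hS : s ≤ S) (U : Fin p → Fin S → ℝ) (V : Fin S → Fin q → ℝ)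
      (hU : ∀ i k, 0 < U i k) (hV : ∀ k j, 0 < V k j) :
      MvPolynomial.eval (fun e => ∑ k, U e.1 k * V k e.2) P = 0 := by
  induction S, hS using Nat.le_induction with
  | base => exact hv U V hU hV
  | succ S hS ih => exact aux_pos (by omega) (by omega) P hP hpos ih U V hU hV

theorem aux_zero {p q s n : ℕ} (hs : 1 ≤ s) (hsq : s ≤ q) (hn : n < 2 * (s + 1))
    (P : MvPolynomial (Fin p × Fin q) ℝ) (hP : P.IsHomogeneous n)
    (hpos : ∀ A : Fin p × Fin q → ℝ, (∀ e, 0 < A e) → 0 ≤ MvPolynomial.eval A P)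
    (hv : ∀ (U : Fin p → Fin s → ℝ) (V : Fin s → Fin q → ℝ),
      (∀ i k, 0 < U i k) → (∀ k j, 0 < V k j) →
      MvPolynomial.eval (fun e => ∑ k, U e.1 k * V k e.2) P = 0)
    (A : Fin p × Fin q → ℝ) : MvPolynomial.eval A P = 0 := by
  obtain ⟨g, hg⟩ : ∃ g : Fin p × Fin q → MvPolynomial ((Fin p × Fin q) ⊕ (Fin q × Fin q)) ℝ,
    g = fun e => ∑ k, MvPolynomial.X (Sum.inl (e.1, k)) * MvPolynomial.X (Sum.inr (k, e.2)) :=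
      ⟨_, rfl⟩
  have hG : ∀ w, MvPolynomial.eval w (MvPolynomial.aeval g P) =
        MvPolynomial.eval (fun e => ∑ k, w (Sum.inl (e.1, k)) * w (Sum.inr (k, e.2))) P := by
    intro w
    rw [aux_eval]
    congr 2
    ext e
    simp [hg]
  have G0 : (MvPolynomial.aeval g P : MvPolynomial ((Fin p × Fin q) ⊕ (Fin q × Fin q)) ℝ) = 0 := by
    refine MvPolynomial.funext_set (fun _ => Set.Ioi (0:ℝ)) (fun _ => Set.Ioi_infinite 0) ?_
    intro w hw
    rw [hG, map_zero]
    exact aux_iter hs hn P hP hpos hv q hsq (fun i k => w (Sum.inl (i,k)))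
      (fun k j => w (Sum.inr (k,j))) (fun i k => hw _ trivial) (fun k j => hw _ trivial)
  have := hG (Sum.elim A (fun e => if e.1 = e.2 then 1 else 0))
  rw [G0, map_zero] at this
  simpa using this.symm

theorem mem_cv {ι : Type} [Fintype ι] [DecidableEq ι] {n : ℕ} {x : ι → ℕ} :
    x ∈ countVecs ι n ↔ ∑ i, x i = n := by
  simp only [countVecs, Finset.mem_filter, Fintype.mem_piFinset, Finset.mem_range,
    and_iff_right_iff_imp]
  intro h i
  have := Finset.single_le_sum (f := x) (fun _ _ => Nat.zero_le _) (Finset.mem_univ i)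
  omega

theorem pw_const {ι : Type} [Fintype ι] [DecidableEq ι] (n : ℕ) (a : ℝ) (π : ι → ℝ) :
    powerFn ι n (fun _ => a) π = a * (∑ i, π i) ^ n := by
  rw [Finset.sum_pow_eq_sum_piAntidiag, Finset.mul_sum]
  have : countVecs ι n = piAntidiag univ n := by
    ext x; simp [mem_cv]
  rw [powerFn, this]
  exact Finset.sum_congr rfl fun x _ => by ring

theorem pw_add {ι : Type} [Fintype ι] [DecidableEq ι] (n : ℕ) (φ ψ : (ι → ℕ) → ℝ) (π : ι → ℝ) :
    powerFn ι n (fun x => φ x + ψ x) π = powerFn ι n φ π + powerFn ι n ψ π := by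
  simp only [powerFn, add_mul, Finset.sum_add_distrib]

theorem pw_mul {ι : Type} [Fintype ι] [DecidableEq ι] (n : ℕ) (c : ℝ) (ψ : (ι → ℕ) → ℝ)
    (π : ι → ℝ) :
    powerFn ι n (fun x => c * ψ x) π = c * powerFn ι n ψ π := by
  simp only [powerFn, mul_assoc, Finset.mul_sum]

theorem pw_smul {ι : Type} [Fintype ι] [DecidableEq ι] (n : ℕ) (c : ℝ) (ψ : (ι → ℕ) → ℝ)
    (π : ι → ℝ) :
    powerFn ι n ψ (fun i => c * π i) = c ^ n * powerFn ι n ψ π := by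
  rw [powerFn, powerFn, Finset.mul_sum]
  refine Finset.sum_congr rfl fun x hx => ?_
  simp only [mul_pow, Finset.prod_mul_distrib]
  rw [Finset.prod_pow_eq_pow_sum, mem_cv.1 hx]
  ring

theorem pw_cont {ι : Type} [Fintype ι] [DecidableEq ι] (n : ℕ) (ψ : (ι → ℕ) → ℝ) :
    Continuous (powerFn ι n ψ) := by
  unfold powerFn
  fun_prop

theorem pw_poly {ι : Type} [Fintype ι] [DecidableEq ι] (n : ℕ) (ψ : (ι → ℕ) → ℝ) :
    ∃ P : MvPolynomial ι ℝ, P.IsHomogeneous n ∧ ∀ π, MvPolynomial.eval π P = powerFn ι n ψ π := by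
  refine ⟨∑ x ∈ countVecs ι n, MvPolynomial.monomial (Finsupp.equivFunOnFinite.symm x)
    (ψ x * (Nat.multinomial Finset.univ x : ℝ)), ?_, ?_⟩
  · refine MvPolynomial.IsHomogeneous.sum _ _ _ fun x hx => ?_
    refine MvPolynomial.isHomogeneous_monomial _ ?_
    rw [Finsupp.degree_eq_sum]
    exact mem_cv.1 hx
  · intro π
    rw [map_sum, powerFn]
    refine Finset.sum_congr rfl fun x hx => ?_
    rw [MvPolynomial.eval_monomial, Finsupp.prod_fintype _ _ (by simp)]
    rfl

theorem pw_of_poly {ι : Type} [Fintype ι] [DecidableEq ι] (n : ℕ) (P : MvPolynomial ι ℝ)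
    (hP : P.IsHomogeneous n) :
    ∃ ψ : (ι → ℕ) → ℝ, ∀ π, powerFn ι n ψ π = MvPolynomial.eval π P := by
  refine ⟨fun x => P.coeff (Finsupp.equivFunOnFinite.symm x) / (Nat.multinomial Finset.univ x : ℝ),
    fun π => ?_⟩
  have hdeg : ∀ d ∈ P.support, ∑ i, d i = n := by
    intro d hd
    have := hP (MvPolynomial.mem_support_iff.1 hd)
    rw [Finsupp.weight_apply, Finsupp.sum_fintype _ _ (by simp)] at this
    simpa using this
  rw [MvPolynomial.eval_eq', powerFn]
  symm
  refine Finset.sum_of_injOn (fun d => ⇑d) (DFunLike.coe_injective.injOn) ?_ ?_ ?_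
  · intro d hd
    exact mem_cv.2 (hdeg d hd)
  · intro x hx hn
    have : P.coeff (Finsupp.equivFunOnFinite.symm x) = 0 := by
      by_contra h
      exact hn ⟨_, MvPolynomial.mem_support_iff.2 h, rfl⟩
    simp [this]
  · intro d hd
    have hne : (Nat.multinomial Finset.univ d : ℝ) ≠ 0 := by
      exact_mod_cast (Nat.multinomial_pos _ _).ne'
    rw [div_mul_cancel₀ _ hne]
    simp

theorem minor_rows {m n r : ℕ} (A : Matrix (Fin m) (Fin n) ℝ) (h : r ≤ A.rank) :
    ∃ s : Finset (Fin m), ∃ hs : s.card = r,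
      LinearIndependent ℝ (fun a : Fin r => A (s.orderIsoOfFin hs a : Fin m)) := by
  classical
  obtain ⟨κ, a, ha, hsp, hli⟩ := exists_linearIndependent' ℝ A.row
  haveI : Fintype κ := Fintype.ofInjective a ha
  have hc : Fintype.card κ = A.rank := by
    rw [A.rank_eq_finrank_span_row, ← hsp, finrank_span_eq_card hli]
  have hc2 : r ≤ (univ.map ⟨a, ha⟩).card := by
    rw [Finset.card_map, Finset.card_univ, hc]; exact h
  obtain ⟨s, hsub, hs⟩ := Finset.exists_subset_card_eq hc2
  refine ⟨s, hs, ?_⟩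
  have : ∀ b : Fin r, ∃ k : κ, a k = (s.orderIsoOfFin hs b : Fin m) := by
    intro b
    have := hsub (s.orderIsoOfFin hs b).2
    simpa using this
  choose g hg using this
  have hgi : Function.Injective g := by
    intro b c hbc
    have h1 := hg b
    rw [hbc, hg c] at h1
    exact ((s.orderIsoOfFin hs).injective (Subtype.ext h1)).symm
  have := hli.comp g hgi
  have he : (fun b : Fin r => A (s.orderIsoOfFin hs b : Fin m)) = (A.row ∘ a) ∘ g := by
    funext b
    rw [← hg]; rfl
  rw [he]
  exact this

theorem minor_ne {m n r : ℕ} (A : Matrix (Fin m) (Fin n) ℝ) (h : r ≤ A.rank) :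
    ∃ s : Finset (Fin m), ∃ t : Finset (Fin n), ∃ hs : s.card = r, ∃ ht : t.card = r,
      (Matrix.of fun a b : Fin r =>
        A (s.orderIsoOfFin hs a : Fin m) (t.orderIsoOfFin ht b : Fin n)).det ≠ 0 := by
  obtain ⟨s, hs, hli⟩ := minor_rows A h
  let B : Matrix (Fin r) (Fin n) ℝ := fun a => A (s.orderIsoOfFin hs a : Fin m)
  have hB : B.rank = r := by
    have := LinearIndependent.rank_matrix (M := B) hli
    simpa using this
  obtain ⟨t, ht, hli2⟩ := minor_rows B.transpose (r := r) (by rw [Matrix.rank_transpose, hB])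
  refine ⟨s, t, hs, ht, ?_⟩
  rw [← Matrix.det_transpose, ← isUnit_iff_ne_zero, ← Matrix.isUnit_iff_isUnit_det,
    ← Matrix.linearIndependent_rows_iff_isUnit]
  exact hli2

theorem minor_zero {m n r : ℕ} (A : Matrix (Fin m) (Fin n) ℝ) (h : A.rank < r)
    (f : Fin r → Fin m) (g : Fin r → Fin n) : (Matrix.of fun a b => A (f a) (g b)).det = 0 := by
  by_contra hne
  have h1 := Matrix.rank_of_det_ne_zero hne
  have h2 := A.rank_submatrix_le f g
  have : (Matrix.of fun a b => A (f a) (g b)) = A.submatrix f g := rfl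
  rw [this] at h1
  simp at h1
  omega

theorem det_poly {p q r : ℕ} (f : Fin r → Fin p) (g : Fin r → Fin q) :
    ∃ P : MvPolynomial (Fin p × Fin q) ℝ, P.IsHomogeneous r ∧
      ∀ π, MvPolynomial.eval π P = (Matrix.of fun a b => π (f a, g b)).det := by
  refine ⟨(Matrix.of fun a b => MvPolynomial.X (f a, g b)).det, ?_, ?_⟩
  · rw [Matrix.det_apply]
    refine MvPolynomial.IsHomogeneous.sum _ _ _ fun σ _ => ?_
    have : (∏ i, (MvPolynomial.X (f (σ i), g i) : MvPolynomial (Fin p × Fin q) ℝ)).IsHomogeneous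
        (∑ i : Fin r, 1) :=
      MvPolynomial.IsHomogeneous.prod _ _ _ fun i _ => MvPolynomial.isHomogeneous_X _ _
    simp only [sum_const, card_univ, Fintype.card_fin, smul_eq_mul, mul_one] at this
    simp only [Matrix.of_apply]
    rcases Int.units_eq_one_or (Equiv.Perm.sign σ) with h | h <;> rw [h]
    · simpa using this
    · simpa using this.neg
  · intro π
    rw [RingHom.map_det]
    congr 1
    ext a b
    simp

theorem minor_poly (p q r : ℕ) (s : Finset (Fin p)) (t : Finset (Fin q)) :
    ∃ P : MvPolynomial (Fin p × Fin q) ℝ, P.IsHomogeneous (2 * r) ∧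
      ∀ π, MvPolynomial.eval π P = minorDetSq p q r π s t := by
  by_cases h : s.card = r ∧ t.card = r
  · obtain ⟨P, hP, he⟩ := det_poly (fun a => (s.orderIsoOfFin h.1 a : Fin p))
      (fun b => (t.orderIsoOfFin h.2 b : Fin q))
    refine ⟨P ^ 2, ?_, ?_⟩
    · have := hP.pow 2
      rwa [mul_comm] at this
    · intro π
      rw [map_pow, he, minorDetSq, dif_pos h]
  · refine ⟨0, MvPolynomial.isHomogeneous_zero _ _ _, ?_⟩
    intro π
    rw [map_zero, minorDetSq, dif_neg h]

theorem minor_nonneg (p q r : ℕ) (π : Fin p × Fin q → ℝ) (s : Finset (Fin p)) (t : Finset (Fin q)) :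
    0 ≤ minorDetSq p q r π s t := by
  unfold minorDetSq
  split_ifs
  · positivity
  · exact le_rfl

/-- the sum of squared minors -/
noncomputable def sumMin (p q r : ℕ) (π : Fin p × Fin q → ℝ) : ℝ :=
  ∑ s ∈ Finset.powersetCard r (Finset.univ : Finset (Fin p)),
    ∑ t ∈ Finset.powersetCard r (Finset.univ : Finset (Fin q)), minorDetSq p q r π s t

theorem sumMin_zero (p q r : ℕ) (π : Fin p × Fin q → ℝ)
    (h : (Matrix.of fun i j => π (i, j)).rank < r) : sumMin p q r π = 0 := by
  refine Finset.sum_eq_zero fun s _ => Finset.sum_eq_zero fun t _ => ?_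
  unfold minorDetSq
  split_ifs with hh
  · have := minor_zero _ h (fun a => (s.orderIsoOfFin hh.1 a : Fin p))
      (fun b => (t.orderIsoOfFin hh.2 b : Fin q))
    simp only [Matrix.of_apply] at this
    rw [this]; simp
  · rfl

theorem sumMin_pos (p q r : ℕ) (π : Fin p × Fin q → ℝ)
    (h : r ≤ (Matrix.of fun i j => π (i, j)).rank) : 0 < sumMin p q r π := by
  obtain ⟨s, t, hs, ht, hne⟩ := minor_ne _ h
  have h1 : 0 < minorDetSq p q r π s t := by
    rw [minorDetSq, dif_pos ⟨hs, ht⟩]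
    simp only [Matrix.of_apply] at hne
    positivity
  refine Finset.sum_pos' (fun s _ => Finset.sum_nonneg fun t _ => minor_nonneg _ _ _ _ _ _)
    ⟨s, by simp [hs], ?_⟩
  exact Finset.sum_pos' (fun t _ => minor_nonneg _ _ _ _ _ _) ⟨t, by simp [ht], h1⟩

theorem sumMin_poly (p q r : ℕ) :
    ∃ P : MvPolynomial (Fin p × Fin q) ℝ, P.IsHomogeneous (2 * r) ∧
      ∀ π, MvPolynomial.eval π P = sumMin p q r π := by
  choose P hP he using minor_poly p q r
  refine ⟨∑ s ∈ Finset.powersetCard r (Finset.univ : Finset (Fin p)),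
    ∑ t ∈ Finset.powersetCard r (Finset.univ : Finset (Fin q)), P s t, ?_, ?_⟩
  · exact MvPolynomial.IsHomogeneous.sum _ _ _ fun s _ =>
      MvPolynomial.IsHomogeneous.sum _ _ _ fun t _ => hP s t
  · intro π
    simp only [map_sum, he, sumMin]

theorem exists_null (p q r : ℕ) (hp : 2 ≤ p) (hq : 2 ≤ q) (hr2 : 2 ≤ r) :
    ∃ π ∈ probSimplex (Fin p × Fin q), (Matrix.of fun i j => π (i, j)).rank < r := by
  classical
  let i0 : Fin p := ⟨0, by omega⟩
  let j0 : Fin q := ⟨0, by omega⟩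
  refine ⟨fun e => if e = (i0, j0) then 1 else 0, ⟨fun e => ?_, by simp⟩, ?_⟩
  · beta_reduce; split_ifs <;> norm_num
  · have : (Matrix.of fun i j => if ((i, j) : Fin p × Fin q) = (i0, j0) then (1:ℝ) else 0) =
      Matrix.vecMulVec (fun i => if i = i0 then 1 else 0) (fun j => if j = j0 then 1 else 0) := by
      ext i j
      by_cases h1 : i = i0 <;> by_cases h2 : j = j0 <;> simp [Matrix.vecMulVec_apply, h1, h2]
    rw [this]
    exact lt_of_le_of_lt (Matrix.rank_vecMulVec_le _ _) (by omega)

theorem part2 (p q r : ℕ) (hp : 2 ≤ p) (hq : 2 ≤ q) (hr2 : 2 ≤ r)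
    (P0 : Set (Fin p × Fin q → ℝ))
    (hP0 : P0 = {π ∈ probSimplex (Fin p × Fin q) |
      (Matrix.of fun i j => π (i, j)).rank < r}) (α : ℝ) (hα : α ∈ Set.Ioo (0 : ℝ) 1) :
    ∃ c : ℝ, 0 < c ∧ ∃ φ,
      IsTest (Fin p × Fin q) (2 * r) φ ∧
      IsSUB (Fin p × Fin q) (2 * r) P0 φ ∧
      HasSize (Fin p × Fin q) (2 * r) P0 α φ ∧
      ∀ π ∈ probSimplex (Fin p × Fin q),
        powerFn (Fin p × Fin q) (2 * r) φ π = c * sumMin p q r π + α := by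
  obtain ⟨P, hP, he⟩ := sumMin_poly p q r
  obtain ⟨ψ, hψ⟩ := pw_of_poly _ P hP
  let M : ℝ := ∑ x ∈ countVecs (Fin p × Fin q) (2 * r), |ψ x|
  have hM : 0 ≤ M := Finset.sum_nonneg fun _ _ => abs_nonneg _
  have hMx : ∀ x ∈ countVecs (Fin p × Fin q) (2 * r), |ψ x| ≤ M := fun x hx =>
    Finset.single_le_sum (f := fun x => |ψ x|) (fun _ _ => abs_nonneg _) hx
  obtain ⟨h0, h1⟩ := hα
  let d : ℝ := min α (1 - α)
  have hd : 0 < d := lt_min h0 (by linarith)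
  let c : ℝ := d / (M + 1)
  have hc : 0 < c := div_pos hd (by linarith)
  have hcM : c * M ≤ d := by
    have : c * (M + 1) = d := div_mul_cancel₀ _ (by linarith)
    nlinarith
  have hpow : ∀ π ∈ probSimplex (Fin p × Fin q),
        powerFn (Fin p × Fin q) (2 * r) (fun x => c * ψ x + α) π = c * sumMin p q r π + α := by
    intro π hπ
    rw [pw_add _ (fun x => c * ψ x) (fun _ => α), pw_mul, pw_const, hψ, he, hπ.2]
    simp
  have hnull : ∀ π ∈ P0, powerFn (Fin p × Fin q) (2 * r) (fun x => c * ψ x + α) π = α := by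
    intro π hπ
    rw [hP0] at hπ
    rw [hpow π hπ.1, sumMin_zero _ _ _ _ hπ.2]; simp
  refine ⟨c, hc, fun x => c * ψ x + α, ?_, ?_, ?_, hpow⟩
  · intro x hx
    have h2 := abs_le.1 (hMx x hx)
    have h3 : d ≤ α := min_le_left _ _
    have h4 : d ≤ 1 - α := min_le_right _ _
    constructor <;> nlinarith
  · intro π0 hπ0 πA hπA
    rw [hnull π0 hπ0, hpow πA hπA.1]
    have : r ≤ (Matrix.of fun i j => πA (i, j)).rank := by
      by_contra hlt
      exact hπA.2 (by rw [hP0]; exact ⟨hπA.1, not_le.1 hlt⟩)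
    have := sumMin_pos _ _ _ _ this
    have := mul_pos hc this
    linarith
  · obtain ⟨π, h1, h2⟩ := exists_null p q r hp hq hr2
    have hm : π ∈ P0 := by rw [hP0]; exact ⟨h1, h2⟩
    constructor
    · rintro _ ⟨y, hy, rfl⟩
      exact (hnull y hy).le
    · intro b hb
      rw [← hnull π hm]
      exact hb ⟨π, hm, rfl⟩

theorem pw_normalize {p q r n : ℕ} (φ : (Fin p × Fin q → ℕ) → ℝ) (A : Fin p × Fin q → ℝ)
    (hA : ∀ e, 0 ≤ A e) (hs : 0 < ∑ e, A e) :
    ∃ B ∈ probSimplex (Fin p × Fin q),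
      ((Matrix.of fun i j => B (i, j)).rank < r ↔ (Matrix.of fun i j => A (i, j)).rank < r) ∧
      powerFn _ n φ A = (∑ e, A e) ^ n * powerFn _ n φ B := by
  have hne := hs.ne'
  refine ⟨fun e => (∑ e, A e)⁻¹ * A e, ⟨fun e => mul_nonneg (inv_nonneg.2 hs.le) (hA e), ?_⟩, ?_, ?_⟩
  · rw [← Finset.mul_sum, inv_mul_cancel₀ hne]
  · have : (Matrix.of fun i j => (∑ e, A e)⁻¹ * A (i, j)) =
      (∑ e, A e)⁻¹ • (Matrix.of fun i j => A (i, j)) := by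
      ext i j; simp
    rw [this, Matrix.rank_smul_of_mem_nonZeroDivisors]
    exact mem_nonZeroDivisors_of_ne_zero (inv_ne_zero hne)
  · rw [pw_smul, ← mul_assoc, ← mul_pow, mul_inv_cancel₀ hne, one_pow, one_mul]

theorem rank_ev (p q r : ℕ) (hrp : r ≤ p) (hrq : r ≤ q) (π : Fin p × Fin q → ℝ) :
    ∀ᶠ x in nhdsWithin (0:ℝ) (Set.Ioi 0),
      r ≤ (Matrix.of fun i j => π (i, j) + x *
        (if (i : ℕ) = (j : ℕ) then 1 else 0 : ℝ) : Matrix (Fin p) (Fin q) ℝ).rank := by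
  let N : Matrix (Fin r) (Fin r) ℝ :=
    Matrix.of fun a b => - π (Fin.castLE hrp a, Fin.castLE hrq b)
  have hN : N.charpoly ≠ 0 := N.charpoly_monic.ne_zero
  have hfin : (N.charpoly.roots.toFinset.erase 0 : Set ℝ).Finite := Finset.finite_toSet _
  have hev : ∀ᶠ x in nhds (0:ℝ), x ∈ ((N.charpoly.roots.toFinset.erase 0 : Finset ℝ) : Set ℝ)ᶜ :=
    (Finset.finite_toSet _).isClosed.isOpen_compl.mem_nhds (by simp)
  filter_upwards [self_mem_nhdsWithin, hev.filter_mono nhdsWithin_le_nhds] with x hx hx2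
  by_contra hlt
  have hz := minor_zero _ (not_le.1 hlt) (Fin.castLE hrp) (Fin.castLE hrq)
  apply hx2
  have hx0 : x ≠ 0 := ne_of_gt hx
  simp only [coe_erase, Set.mem_diff, mem_coe, Multiset.mem_toFinset, Set.mem_singleton_iff]
  refine ⟨(Polynomial.mem_roots hN).2 ?_, hx0⟩
  rw [Polynomial.IsRoot, Matrix.eval_charpoly, ← hz]
  congr 1
  ext a b
  by_cases hab : a = b
  · subst hab; simp [N, add_comm]
  · have : (a : ℕ) ≠ b := fun h => hab (Fin.ext h)
    simp [N, hab, this]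

theorem null_const (p q r n : ℕ) (hrp : r ≤ p) (hrq : r ≤ q)
    (P0 : Set (Fin p × Fin q → ℝ))
    (hP0 : P0 = {π ∈ probSimplex (Fin p × Fin q) |
      (Matrix.of fun i j => π (i, j)).rank < r}) (φ : (Fin p × Fin q → ℕ) → ℝ)
    (hU : Unbiased (Fin p × Fin q) n P0 φ) (π0 π1 : Fin p × Fin q → ℝ) (h0 : π0 ∈ P0)
    (h1 : π1 ∈ P0) : powerFn _ n φ π1 ≤ powerFn _ n φ π0 := by
  let A : ℝ → Fin p × Fin q → ℝ := fun x e => π0 e + x *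
        (if (e.1 : ℕ) = (e.2 : ℕ) then 1 else 0 : ℝ)
  have h0' : π0 ∈ probSimplex _ := by rw [hP0] at h0; exact h0.1
  have hAc : Continuous A := by
    refine continuous_pi fun e => ?_
    fun_prop
  have hA0 : A 0 = π0 := by ext e; simp [A]
  have hc1 : Continuous fun x => powerFn _ n φ (A x) := (pw_cont n φ).comp hAc
  have hc2 : Continuous fun x => (∑ e, A x e) ^ n * powerFn _ n φ π1 := by
    refine Continuous.mul (Continuous.pow ?_ n) continuous_const
    exact continuous_finsetSum _ fun e _ => (continuous_apply e).comp hAc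
  have t1 := (hc1.tendsto 0).mono_left (nhdsWithin_le_nhds (s := Set.Ioi 0))
  have t2 := (hc2.tendsto 0).mono_left (nhdsWithin_le_nhds (s := Set.Ioi 0))
  beta_reduce at t1 t2
  rw [hA0] at t1 t2
  rw [h0'.2, one_pow, one_mul] at t2
  refine le_of_tendsto_of_tendsto t2 t1 ?_
  filter_upwards [self_mem_nhdsWithin, rank_ev p q r hrp hrq π0] with x hx hrk
  have hx' : (0:ℝ) ≤ x := le_of_lt hx
  have hge : ∀ e, π0 e ≤ A x e := by
    intro e
    have : 0 ≤ x * (if (e.1 : ℕ) = (e.2 : ℕ) then 1 else 0 : ℝ) :=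
      mul_nonneg hx' (by split_ifs <;> norm_num)
    simpa [A] using this
  have hnn : ∀ e, 0 ≤ A x e := fun e => (h0'.1 e).trans (hge e)
  have hs : 0 < ∑ e, A x e := by
    have := Finset.sum_le_sum (s := univ) fun e _ => hge e
    rw [h0'.2] at this
    linarith
  obtain ⟨B, hB, hBr, hBe⟩ := pw_normalize (r := r) (n := n) φ (A x) hnn hs
  rw [hBe]
  refine mul_le_mul_of_nonneg_left ?_ (pow_nonneg hs.le n)
  refine hU π1 h1 B ⟨hB, fun hm => ?_⟩
  rw [hP0] at hm
  exact absurd (hBr.1 hm.2) (not_lt.2 hrk)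

theorem part1 (p q r : ℕ) (hp : 2 ≤ p) (hq : 2 ≤ q) (hr2 : 2 ≤ r) (hrp : r ≤ p) (hrq : r ≤ q)
    (P0 : Set (Fin p × Fin q → ℝ))
    (hP0 : P0 = {π ∈ probSimplex (Fin p × Fin q) |
      (Matrix.of fun i j => π (i, j)).rank < r}) (n : ℕ) (hn : n < 2 * r)
    (φ : (Fin p × Fin q → ℕ) → ℝ) (hU : Unbiased (Fin p × Fin q) n P0 φ) :
    ∃ a : ℝ, ∀ π ∈ probSimplex (Fin p × Fin q), powerFn _ n φ π = a := by
  obtain ⟨πs, hs1, hs2⟩ := exists_null p q r hp hq hr2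
  have hs : πs ∈ P0 := by rw [hP0]; exact ⟨hs1, hs2⟩
  obtain ⟨a, ha⟩ : ∃ a, a = powerFn _ n φ πs := ⟨_, rfl⟩
  have hnull : ∀ π ∈ P0, powerFn _ n φ π = a := by
    intro π hπ
    rw [ha]
    exact le_antisymm (null_const p q r n hrp hrq P0 hP0 φ hU _ _ hs hπ)
      (null_const p q r n hrp hrq P0 hP0 φ hU _ _ hπ hs)
  have hge : ∀ π ∈ probSimplex (Fin p × Fin q), a ≤ powerFn _ n φ π := by
    intro π hπ
    by_cases h : π ∈ P0
    · exact (hnull π h).ge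
    · rw [ha]; exact hU πs hs π ⟨hπ, h⟩
  obtain ⟨P, hP, hPe⟩ := pw_poly n (fun x => φ x + (fun _ => -a) x)
  have hPe2 : ∀ π ∈ probSimplex (Fin p × Fin q), powerFn _ n (fun x => φ x + (fun _ => -a) x) π
      = powerFn _ n φ π - a := by
    intro π hπ
    rw [pw_add, pw_const, hπ.2]; simp [sub_eq_add_neg]
  haveI : Nonempty (Fin p × Fin q) := ⟨(⟨0, by omega⟩, ⟨0, by omega⟩)⟩
  have hzero := aux_zero (s := r - 1) (by omega) (by omega) (by omega) P hP ?_ ?_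
  · refine ⟨a, fun π hπ => ?_⟩
    have := hzero π
    rw [hPe, hPe2 π hπ] at this
    linarith
  · intro A hA
    have hsum : 0 < ∑ e, A e := Finset.sum_pos (fun e _ => hA e) Finset.univ_nonempty
    obtain ⟨B, hB, -, hBe⟩ := pw_normalize (r := r) (n := n) (fun x => φ x + (fun _ => -a) x) A
      (fun e => (hA e).le) hsum
    rw [hPe, hBe, hPe2 B hB]
    exact mul_nonneg (pow_nonneg hsum.le n) (by linarith [hge B hB])
  · intro U V hU hV
    haveI : Nonempty (Fin (r - 1)) := ⟨⟨0, by omega⟩⟩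
    have hA : ∀ e : Fin p × Fin q, 0 < ∑ k, U e.1 k * V k e.2 := fun e =>
      Finset.sum_pos (fun k _ => mul_pos (hU _ _) (hV _ _)) Finset.univ_nonempty
    have hsum := Finset.sum_pos (fun e _ => hA e) Finset.univ_nonempty
    obtain ⟨B, hB, hBr, hBe⟩ := pw_normalize (r := r) (n := n) (fun x => φ x + (fun _ => -a) x)
      (fun e : Fin p × Fin q => ∑ k, U e.1 k * V k e.2) (fun e => (hA e).le) hsum
    have hrk : (Matrix.of fun i j => ∑ k, U i k * V k j).rank < r := by
      have : (Matrix.of fun i j => ∑ k, U i k * V k j) = Matrix.of U * Matrix.of V := by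
        ext i j; simp [Matrix.mul_apply]
      rw [this]
      have h1 := Matrix.rank_mul_le_left (Matrix.of U) (Matrix.of V)
      have h2 := Matrix.rank_le_width (Matrix.of U)
      omega
    have hBm : B ∈ P0 := by rw [hP0]; exact ⟨hB, hBr.2 hrk⟩
    rw [hPe, hBe, hPe2 B hB, hnull B hBm]
    simp

/-- the NTUB and SUB unbiasedness thresholds for the bounded-rank null
hypothesis both equal `2r`, with an SUB power polynomial `c·∑_{I,J} det(π_{I,J})² + α`. -/
theorem stmt_17 (p q r : ℕ) (hp : 2 ≤ p) (hq : 2 ≤ q) (hr2 : 2 ≤ r) (hr : r ≤ min p q)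
    (P0 : Set (Fin p × Fin q → ℝ))
    (hP0 : P0 = {π ∈ probSimplex (Fin p × Fin q) |
      (Matrix.of fun i j => π (i, j)).rank < r}) :
    (∀ n : ℕ, n < 2 * r →
      ¬ ∃ φ, IsTest (Fin p × Fin q) n φ ∧ IsNTUB (Fin p × Fin q) n P0 φ) ∧
    (∀ α : ℝ, α ∈ Set.Ioo (0 : ℝ) 1 → ∃ c : ℝ, 0 < c ∧ ∃ φ,
      IsTest (Fin p × Fin q) (2 * r) φ ∧
      IsSUB (Fin p × Fin q) (2 * r) P0 φ ∧
      HasSize (Fin p × Fin q) (2 * r) P0 α φ ∧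
      ∀ π ∈ probSimplex (Fin p × Fin q),
        powerFn (Fin p × Fin q) (2 * r) φ π =
          c * (∑ s ∈ Finset.powersetCard r (Finset.univ : Finset (Fin p)),
               ∑ t ∈ Finset.powersetCard r (Finset.univ : Finset (Fin q)),
                 minorDetSq p q r π s t) + α) := by
  constructor
  · rintro n hn ⟨φ, -, hU, π, hπ, π', hπ', hne⟩
    obtain ⟨a, ha⟩ := part1 p q r hp hq hr2 (hr.trans (min_le_left _ _))
      (hr.trans (min_le_right _ _)) P0 hP0 n hn φ hU
    exact hne ((ha π hπ).trans (ha π' hπ').symm)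
  · intro α hα
    exact part2 p q r hp hq hr2 P0 hP0 α hα
end

section
/- Let p, q ≥ 2 and 2 ≤ r ≤ min(p,q), and let P0 = {π : (Fin p × Fin q) → ℝ | π_{ij} ≥ 0 for all (i,j), ∑_{ij} π_{ij} = 1, and the p×q real matrix (π_{ij}) has rank < r}. Then the set of polynomials in MvPolynomial (Fin p × Fin q) ℝ that vanish at every point of P0 is exactly the ideal generated by the polynomial 1 − ∑_{ij} X_{ij} together with the determinants of all r×r submatrices of the matrix of variables (X_{ij}) (i.e., for each pair of r-element subsets I of the rows and J of the columns, the polynomial det((X_{ij})_{i∈I, j∈J})). -/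
open Finset

/-- The determinant of the `r × r` submatrix, with rows `s` and columns `t`, of the matrix
of variables `(X_{ij})` in `MvPolynomial (Fin p × Fin q) ℝ`. -/
noncomputable def minorPoly (p q r : ℕ) (s : Finset (Fin p)) (t : Finset (Fin q))
    (hs : s.card = r) (ht : t.card = r) : MvPolynomial (Fin p × Fin q) ℝ :=
  Matrix.det (Matrix.of fun a b : Fin r =>
    MvPolynomial.X ((s.orderIsoOfFin hs a : Fin p), (t.orderIsoOfFin ht b : Fin q)))


lemma color_exists {α : Type*} (r : α → α → Prop) (htr : ∀ x y z, r x y → r y z → r x z) (n : ℕ) :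
    ∀ S : Set α, (∀ f : Fin (n+1) → α, (∀ a, f a ∈ S) → ¬ (∀ a b, a < b → r (f a) (f b))) →
    ∃ c : α → ℕ, (∀ x ∈ S, c x < n) ∧ ∀ x ∈ S, ∀ y ∈ S, c x = c y → ¬ r x y := by
  induction n with
  | zero =>
    intro S h
    have hS : ∀ x, x ∉ S := fun x hx => h (fun _ => x) (fun _ => hx) (fun a b hab => by omega)
    exact ⟨fun _ => 0, fun x hx => (hS x hx).elim, fun x hx => (hS x hx).elim⟩
  | succ n ih =>
    intro S h
    obtain ⟨c, hc1, hc2⟩ := ih {x | x ∈ S ∧ ∃ y ∈ S, r y x} (by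
      intro f hf hch
      obtain ⟨y, hy, hry⟩ := (hf 0).2
      refine h (Fin.cons y f) ?_ ?_
      · intro a
        refine Fin.cases ?_ (fun a => ?_) a
        · simpa using hy
        · simpa using (hf a).1
      · intro a b
        refine Fin.cases ?_ (fun b => ?_) b
        · intro hab; exact absurd hab (by simp)
        · refine Fin.cases ?_ (fun a => ?_) a
          · intro _
            simp only [Fin.cons_zero, Fin.cons_succ]
            by_cases hb : b = 0
            · rw [hb]; exact hry
            · exact htr _ _ _ hry (hch 0 b (Fin.pos_iff_ne_zero.mpr hb))
          · intro hab
            simp only [Fin.cons_succ]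
            exact hch a b (by simpa using hab))
    classical
    refine ⟨fun x => if x ∈ S ∧ ∃ y ∈ S, r y x then c x else n, ?_, ?_⟩
    · intro x hx
      dsimp only
      split_ifs with h1
      · exact (hc1 x h1).trans (by omega)
      · omega
    · intro x hx y hy hxy hr
      have hy' : y ∈ S ∧ ∃ z ∈ S, r z y := ⟨hy, x, hx, hr⟩
      dsimp only at hxy
      rw [if_pos hy'] at hxy
      split_ifs at hxy with h1
      · exact hc2 x h1 y hy' hxy hr
      · exact absurd (hc1 y hy') (by omega)

/-- weight -/
def wt {p q : ℕ} (m : Fin p × Fin q →₀ ℕ) : ℕ := m.sum fun x k => k * ((x.1 + 1) * (x.2 + 1))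

abbrev TT {p q : ℕ} (m : Fin p × Fin q →₀ ℕ) := (x : Fin p × Fin q) × Fin (m x)

lemma sum_TT {p q : ℕ} (m : Fin p × Fin q →₀ ℕ) (F : Fin p × Fin q → ℕ) :
    ∑ t : TT m, F t.1 = ∑ x, m x * F x := by
  rw [Fintype.sum_sigma]; simp

lemma wt_eq {p q : ℕ} (m : Fin p × Fin q →₀ ℕ) :
    wt m = ∑ x : Fin p × Fin q, m x * ((x.1 + 1) * (x.2 + 1)) := by
  rw [wt, Finsupp.sum_fintype]; simp

def NN {p q : ℕ} (m : Fin p × Fin q →₀ ℕ) (a b : ℕ) : ℕ :=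
  ∑ t : TT m, if a ≤ t.1.1.val ∧ b ≤ t.1.2.val then 1 else 0

lemma wt_NN {p q : ℕ} (m : Fin p × Fin q →₀ ℕ) :
    wt m = ∑ a ∈ range p, ∑ b ∈ range q, NN m a b := by
  have h : ∀ x : Fin p × Fin q, ((x.1:ℕ) + 1) * (x.2 + 1) =
      ∑ a ∈ range p, ∑ b ∈ range q, if a ≤ x.1.val ∧ b ≤ x.2.val then 1 else 0 := by
    intro x
    have h1 : ∀ (n k : ℕ), k < n → ∑ a ∈ range n, (if a ≤ k then 1 else 0) = k + 1 := by
      intro n k hk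
      rw [← Finset.card_filter]
      have : (range n).filter (· ≤ k) = range (k+1) := by ext; simp; omega
      rw [this, card_range]
    rw [← h1 p _ x.1.2, ← h1 q _ x.2.2, Finset.sum_mul_sum]
    refine Finset.sum_congr rfl fun a _ => Finset.sum_congr rfl fun b _ => ?_
    split_ifs <;> simp_all
  rw [wt_eq, ← sum_TT m (fun x => ((x.1:ℕ) + 1) * (x.2 + 1))]
  simp only [h, NN]
  rw [Finset.sum_comm]
  refine Finset.sum_congr rfl fun a _ => ?_
  rw [Finset.sum_comm]

lemma NN_inj {p q : ℕ} (m m' : Fin p × Fin q →₀ ℕ)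
    (h : ∀ a b, NN m a b = NN m' a b) : m = m' := by
  have key : ∀ (m : Fin p × Fin q →₀ ℕ) (x : Fin p × Fin q), m x + NN m (x.1+1) x.2 + NN m x.1 (x.2+1)
      = NN m x.1 x.2 + NN m (x.1+1) (x.2+1) := by
    intro m x
    have h1 : m x = ∑ t : TT m, if x = t.1 then 1 else 0 := by
      rw [sum_TT m (fun y => if x = y then 1 else 0)]; simp
    rw [h1]
    simp only [NN, ← Finset.sum_add_distrib]
    refine Finset.sum_congr rfl fun t _ => ?_
    have : x = t.1 ↔ (x.1.val = t.1.1.val ∧ x.2.val = t.1.2.val) := by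
      rw [Prod.ext_iff, Fin.ext_iff, Fin.ext_iff]
    simp only [this]
    split_ifs <;> omega
  ext x
  have := key m x
  have := key m' x
  simp only [h] at *
  omega

/-- exponent of a coloured monomial -/
noncomputable def EE {p q n : ℕ} (m : Fin p × Fin q →₀ ℕ) (c : TT m → Fin n) :
    (Fin p × Fin n) ⊕ (Fin n × Fin q) →₀ ℕ :=
  ∑ t : TT m, (Finsupp.single (Sum.inl (t.1.1, c t)) 1 + Finsupp.single (Sum.inr (c t, t.1.2)) 1)

lemma EE_inl {p q n : ℕ} (m : Fin p × Fin q →₀ ℕ) (c : TT m → Fin n) (i k) :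
    EE m c (Sum.inl (i, k)) = ∑ t : TT m, if t.1.1 = i ∧ c t = k then 1 else 0 := by
  simp [EE, Finsupp.single_apply]

lemma EE_inr {p q n : ℕ} (m : Fin p × Fin q →₀ ℕ) (c : TT m → Fin n) (j k) :
    EE m c (Sum.inr (k, j)) = ∑ t : TT m, if t.1.2 = j ∧ c t = k then 1 else 0 := by
  simp [EE, Finsupp.single_apply, and_comm]

lemma row_marg {p q n : ℕ} (m : Fin p × Fin q →₀ ℕ) (c : TT m → Fin n) (a : ℕ) (k) :
    #{t : TT m | c t = k ∧ a ≤ t.1.1.val} = ∑ i : Fin p, if a ≤ i.val then EE m c (Sum.inl (i,k)) else 0 := by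
  rw [card_filter]
  simp only [EE_inl]
  simp only [Finset.ite_sum_zero]
  simp only [← ite_and]
  rw [Finset.sum_comm' (t' := univ) (s' := fun _ => univ) (by simp)]
  refine Finset.sum_congr rfl fun t _ => ?_
  rw [Finset.sum_eq_single t.1.1]
  · simp [and_comm]
  · intro b _ hb; rw [if_neg]; rintro ⟨_, h, _⟩; exact hb h.symm
  · simp

lemma col_marg {p q n : ℕ} (m : Fin p × Fin q →₀ ℕ) (c : TT m → Fin n) (a : ℕ) (k) :
    #{t : TT m | c t = k ∧ a ≤ t.1.2.val} = ∑ i : Fin q, if a ≤ i.val then EE m c (Sum.inr (k,i)) else 0 := by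
  rw [card_filter]
  simp only [EE_inr]
  simp only [Finset.ite_sum_zero]
  simp only [← ite_and]
  rw [Finset.sum_comm' (t' := univ) (s' := fun _ => univ) (by simp)]
  refine Finset.sum_congr rfl fun t _ => ?_
  rw [Finset.sum_eq_single t.1.2]
  · simp [and_comm]
  · intro b _ hb; rw [if_neg]; rintro ⟨_, h, _⟩; exact hb h.symm
  · simp

lemma NN_color {p q n : ℕ} (m : Fin p × Fin q →₀ ℕ) (c : TT m → Fin n) (a b : ℕ) :
    NN m a b = ∑ k, #(({t : TT m | c t = k ∧ a ≤ t.1.1.val} : Finset (TT m)) ∩ ({t : TT m | c t = k ∧ b ≤ t.1.2.val} : Finset (TT m))) := by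
  rw [NN, ← Finset.card_filter, Finset.card_eq_sum_card_fiberwise (f := c) (t := univ) (by simp)]
  refine Finset.sum_congr rfl fun k _ => ?_
  congr 1
  ext t; simp; tauto

lemma NN_le {p q n : ℕ} (m m' : Fin p × Fin q →₀ ℕ) (c : TT m → Fin n) (c' : TT m' → Fin n)
    (hE : EE m' c' = EE m c)
    (hc : ∀ s t, c s = c t → ¬ (s.1.1 < t.1.1 ∧ t.1.2 < s.1.2)) (a b : ℕ) :
    NN m' a b ≤ NN m a b := by
  rw [NN_color m c, NN_color m' c']
  refine Finset.sum_le_sum fun k _ => ?_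
  have hr := row_marg m c a k
  rw [← hE, ← row_marg] at hr
  have hl := col_marg m c b k
  rw [← hE, ← col_marg] at hl
  by_cases h : ({t : TT m | c t = k ∧ a ≤ t.1.1.val} : Finset (TT m)) ⊆ ({t : TT m | c t = k ∧ b ≤ t.1.2.val} : Finset (TT m))
  · rw [Finset.inter_eq_left.mpr h, hr]
    exact card_le_card inter_subset_left
  · have h' : ({t : TT m | c t = k ∧ b ≤ t.1.2.val} : Finset (TT m)) ⊆ ({t : TT m | c t = k ∧ a ≤ t.1.1.val} : Finset (TT m)) := by
      obtain ⟨t, ht1, ht2⟩ := Finset.not_subset.mp h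
      intro s hs
      simp only [mem_filter, mem_univ, true_and] at *
      refine ⟨hs.1, ?_⟩
      by_contra hlt
      refine hc s t (hs.1.trans ht1.1.symm) ⟨Fin.lt_def.mpr (by omega), Fin.lt_def.mpr ?_⟩
      have : ¬ b ≤ t.1.2.val := fun hh => ht2 ⟨ht1.1, hh⟩
      omega
    rw [Finset.inter_eq_right.mpr h', hl]
    exact card_le_card inter_subset_right

lemma wt_lt {p q n : ℕ} (m m' : Fin p × Fin q →₀ ℕ) (c : TT m → Fin n) (c' : TT m' → Fin n)
    (hE : EE m' c' = EE m c)
    (hc : ∀ s t, c s = c t → ¬ (s.1.1 < t.1.1 ∧ t.1.2 < s.1.2)) (hne : m' ≠ m) :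
    wt m' < wt m := by
  by_contra hlt
  apply hne
  have hle := NN_le m m' c c' hE hc
  have hz : ∀ (m : Fin p × Fin q →₀ ℕ) a b, ¬ (a < p ∧ b < q) → NN m a b = 0 := by
    intro m a b h
    refine Finset.sum_eq_zero fun t _ => if_neg ?_
    have := t.1.1.2
    have := t.1.2.2
    omega
  have heq : wt m' = wt m := by
    refine le_antisymm ?_ (not_lt.mp hlt)
    rw [wt_NN, wt_NN]
    exact Finset.sum_le_sum fun a _ => Finset.sum_le_sum fun b _ => hle a b
  apply NN_inj
  intro a b
  by_cases hab : a < p ∧ b < q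
  · rw [wt_NN, wt_NN, Finset.sum_eq_sum_iff_of_le (fun a _ => Finset.sum_le_sum fun b _ => hle a b)] at heq
    have := heq a (by simpa using hab.1)
    rw [Finset.sum_eq_sum_iff_of_le (fun b _ => hle a b)] at this
    exact this b (by simpa using hab.2)
  · rw [hz _ _ _ hab, hz _ _ _ hab]

noncomputable def phi (p q n : ℕ) : MvPolynomial (Fin p × Fin q) ℝ →ₐ[ℝ]
    MvPolynomial ((Fin p × Fin n) ⊕ (Fin n × Fin q)) ℝ :=
  MvPolynomial.aeval fun x => ∑ k, MvPolynomial.X (Sum.inl (x.1, k)) * MvPolynomial.X (Sum.inr (k, x.2))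

lemma phi_monomial {p q n : ℕ} (m : Fin p × Fin q →₀ ℕ) (a : ℝ) :
    phi p q n (MvPolynomial.monomial m a) = ∑ c : TT m → Fin n, MvPolynomial.monomial (EE m c) a := by
  rw [phi, MvPolynomial.aeval_monomial, Finsupp.prod_fintype _ _ (by simp)]
  have h1 : ∀ F : Fin p × Fin q → MvPolynomial ((Fin p × Fin n) ⊕ (Fin n × Fin q)) ℝ,
      ∏ x, F x ^ m x = ∏ t : TT m, F t.1 := by
    intro F
    rw [Fintype.prod_sigma]; simp
  rw [h1, Finset.prod_univ_sum, Fintype.piFinset_univ, Finset.mul_sum]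
  refine Finset.sum_congr rfl fun c _ => ?_
  have h2 : ∀ t : TT m, (MvPolynomial.X (Sum.inl (t.1.1, c t)) * MvPolynomial.X (Sum.inr (c t, t.1.2)) :
      MvPolynomial ((Fin p × Fin n) ⊕ (Fin n × Fin q)) ℝ) =
      MvPolynomial.monomial (Finsupp.single (Sum.inl (t.1.1, c t)) 1 + Finsupp.single (Sum.inr (c t, t.1.2)) 1) 1 := by
    intro t
    simp [MvPolynomial.X, MvPolynomial.monomial_mul]
  simp only [h2]
  rw [← MvPolynomial.monomial_sum_one, MvPolynomial.algebraMap_eq, MvPolynomial.C_mul_monomial, mul_one, EE]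

def Good {p q : ℕ} (n : ℕ) (m : Fin p × Fin q →₀ ℕ) : Prop :=
  ∀ f : Fin (n+1) → Fin p × Fin q, (∀ a, m (f a) ≠ 0) →
    ¬ (∀ a b, a < b → (f a).1 < (f b).1 ∧ (f b).2 < (f a).2)

lemma phi_good_inj {p q n : ℕ} (g : MvPolynomial (Fin p × Fin q) ℝ) (hg : phi p q n g = 0)
    (hgood : ∀ m ∈ g.support, Good n m) : g = 0 := by
  by_contra hne
  obtain ⟨m, hm, hmin⟩ := Finset.exists_min_image g.support wt (MvPolynomial.support_nonempty.mpr hne)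
  obtain ⟨c, hc1, hc2⟩ := color_exists (fun x y : Fin p × Fin q => x.1 < y.1 ∧ y.2 < x.2)
    (fun x y z h1 h2 => ⟨h1.1.trans h2.1, h2.2.trans h1.2⟩) n {x | m x ≠ 0} (hgood m hm)
  have hT : ∀ t : TT m, m t.1 ≠ 0 := fun t => by have := t.2.2; omega
  let c' : TT m → Fin n := fun t => ⟨c t.1, hc1 t.1 (hT t)⟩
  have hcc : ∀ s t, c' s = c' t → ¬ (s.1.1 < t.1.1 ∧ t.1.2 < s.1.2) := by
    intro s t h
    exact hc2 s.1 (hT s) t.1 (hT t) (by simpa [c'] using h)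
  have h0 : MvPolynomial.coeff (EE m c') (phi p q n g) = 0 := by rw [hg]; simp
  rw [g.as_sum, map_sum, MvPolynomial.coeff_sum, Finset.sum_eq_single m] at h0
  · rw [phi_monomial, MvPolynomial.coeff_sum] at h0
    simp only [MvPolynomial.coeff_monomial] at h0
    rw [← Finset.sum_filter, Finset.sum_const, nsmul_eq_mul, mul_eq_zero] at h0
    rcases h0 with h0 | h0
    · rw [Nat.cast_eq_zero, Finset.card_eq_zero] at h0
      have : c' ∈ ({c | EE m c = EE m c'} : Finset (TT m → Fin n)) := by simp
      rw [h0] at this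
      simp at this
    · exact (MvPolynomial.mem_support_iff.mp hm) h0
  · intro m' hm' hmm
    rw [phi_monomial, MvPolynomial.coeff_sum]
    refine Finset.sum_eq_zero fun d _ => ?_
    rw [MvPolynomial.coeff_monomial, if_neg]
    intro hE
    exact absurd (wt_lt m m' c' d hE hcc hmm) (not_lt.mpr (hmin m' hm'))
  · intro h; exact absurd hm h

lemma det_mem {p q n : ℕ} (I : Ideal (MvPolynomial (Fin p × Fin q) ℝ))
    (hI : ∀ (s : Finset (Fin p)) (t : Finset (Fin q)) (hs : s.card = n+1) (ht : t.card = n+1),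
      minorPoly p q (n+1) s t hs ht ∈ I)
    (i : Fin (n+1) → Fin p) (j : Fin (n+1) → Fin q) (hi : StrictMono i) (hj : StrictAnti j) :
    Matrix.det (Matrix.of fun a b : Fin (n+1) =>
      (MvPolynomial.X (i a, j b) : MvPolynomial (Fin p × Fin q) ℝ)) ∈ I := by
  have hj' : StrictMono (j ∘ Fin.rev) := hj.comp Fin.rev_strictAnti
  have hs : (univ.image i).card = n+1 := by simp [Finset.card_image_of_injective _ hi.injective]
  have ht : (univ.image (j ∘ Fin.rev)).card = n+1 := by
    rw [Finset.card_image_of_injective _ hj'.injective]; simp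
  have h := hI _ _ hs ht
  have e1 := Finset.orderEmbOfFin_unique hs (fun x => mem_image_of_mem i (mem_univ x)) hi
  have e2 := Finset.orderEmbOfFin_unique ht (fun x => mem_image_of_mem (j ∘ Fin.rev) (mem_univ x)) hj'
  have h3 : minorPoly p q (n+1) _ _ hs ht = Matrix.det ((Matrix.of fun a b : Fin (n+1) =>
      (MvPolynomial.X (i a, j b) : MvPolynomial (Fin p × Fin q) ℝ)).submatrix id Fin.revPerm) := by
    unfold minorPoly
    congr 1
    ext1 a b
    simp only [Matrix.of_apply, Matrix.submatrix_apply, id, Finset.coe_orderIsoOfFin_apply]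
    rw [← congrFun e1 a, ← congrFun e2 b]
    rfl
  rw [h3, Matrix.det_permute'] at h
  rcases Int.units_eq_one_or (Equiv.Perm.sign (Fin.revPerm (n := n+1))) with h4 | h4
  · rw [h4] at h; simpa using h
  · rw [h4] at h; simpa using h

lemma wt_add {p q : ℕ} (m m' : Fin p × Fin q →₀ ℕ) : wt (m + m') = wt m + wt m' := by
  simp [wt_eq, add_mul, Finset.sum_add_distrib]

lemma wt_sum_single {p q n : ℕ} (f : Fin n → Fin p × Fin q) :
    wt (∑ a, Finsupp.single (f a) 1) = ∑ a, ((f a).1.val + 1) * ((f a).2.val + 1) := by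
  have h : ∀ s : Finset (Fin n), wt (∑ a ∈ s, Finsupp.single (f a) 1) = ∑ a ∈ s, ((f a).1.val + 1) * ((f a).2.val + 1) := by
    intro s
    induction s using Finset.induction_on with
    | empty => simp [wt]
    | insert a s ha ih => rw [Finset.sum_insert ha, Finset.sum_insert ha, wt_add, ih]; simp [wt]
  exact h univ

lemma wt_le {p q : ℕ} (m : Fin p × Fin q →₀ ℕ) : wt m ≤ m.degree * (p * q) := by
  rw [wt_eq, Finsupp.degree_eq_sum, Finset.sum_mul]
  refine Finset.sum_le_sum fun x _ => Nat.mul_le_mul le_rfl (Nat.mul_le_mul x.1.2 x.2.2)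

lemma reduce_mono {p q n : ℕ} (I : Ideal (MvPolynomial (Fin p × Fin q) ℝ))
    (hI : ∀ (s : Finset (Fin p)) (t : Finset (Fin q)) (hs : s.card = n+1) (ht : t.card = n+1),
      minorPoly p q (n+1) s t hs ht ∈ I) (N : ℕ) :
    ∀ m : Fin p × Fin q →₀ ℕ, m.degree * (p * q) - wt m = N →
    ∃ g : MvPolynomial (Fin p × Fin q) ℝ, MvPolynomial.monomial m 1 - g ∈ I ∧
      ∀ m ∈ g.support, Good n m := by
  induction N using Nat.strong_induction_on with
  | _ N ih =>
  intro m hN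
  by_cases hgood : Good n m
  · refine ⟨MvPolynomial.monomial m 1, by simp, ?_⟩
    intro m' hm'
    have := MvPolynomial.support_monomial_subset hm'
    rw [Finset.mem_singleton] at this
    rwa [this]
  · obtain ⟨f, hf, hch⟩ : ∃ f : Fin (n+1) → Fin p × Fin q, (∀ a, m (f a) ≠ 0) ∧
        (∀ a b, a < b → (f a).1 < (f b).1 ∧ (f b).2 < (f a).2) := by
      by_contra hcon
      exact hgood fun f h1 h2 => hcon ⟨f, h1, h2⟩
    have hi : StrictMono (fun a => (f a).1) := fun a b h => (hch a b h).1
    have hj : StrictAnti (fun a => (f a).2) := fun a b h => (hch a b h).2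
    have hdet := det_mem I hI _ _ hi hj
    let P : Equiv.Perm (Fin (n+1)) → (Fin p × Fin q →₀ ℕ) := fun σ => ∑ a, Finsupp.single ((f a).1, (f (σ a)).2) 1
    have hle : P 1 ≤ m := by
      intro x
      have hfi : Function.Injective f := fun a b h => hi.injective (congrArg Prod.fst h)
      simp only [P, Finsupp.finsetSum_apply, Finsupp.single_apply, Equiv.Perm.one_apply, Prod.mk.eta]
      rw [← Finset.card_filter]
      by_cases hx : ∃ a, f a = x
      · obtain ⟨a, rfl⟩ := hx
        have : ({b | f b = f a} : Finset (Fin (n+1))) = {a} := by ext b; simp [hfi.eq_iff]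
        rw [this, card_singleton]
        exact Nat.one_le_iff_ne_zero.mpr (hf a)
      · rw [Finset.card_eq_zero.mpr]
        · simp
        · ext b; simp; exact fun h => hx ⟨b, h⟩
    obtain ⟨m0, rfl⟩ := exists_add_of_le hle
    have hw : ∀ σ, σ ≠ 1 → wt (P 1) < wt (P σ) := by
      intro σ hσ
      simp only [P, wt_sum_single]
      have hav : Antivary (fun a => (f a).1.val + 1) (fun a => (f a).2.val + 1) := by
        intro a b hab
        have : (f a).2 < (f b).2 := by simpa using hab
        have : b < a := hj.lt_iff_gt.mp this
        have := hi this
        simp only [Fin.lt_def] at this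
        simp only
        omega
      have := (hav.sum_mul_lt_sum_mul_comp_perm_iff (σ := σ)).mpr ?_
      · simpa using this
      · intro hA
        apply hσ
        have hmono : Monotone σ := by
          intro a b hab
          rcases hab.eq_or_lt with rfl | hab
          · exact le_rfl
          by_contra hlt
          have h1 := hj (not_le.mp hlt)
          have h2 := hA (i := a) (j := b) (by simpa using h1)
          have h3 := hi hab
          simp only [Fin.lt_def] at h3
          simp only at h2
          omega
        have hsm : StrictMono σ := hmono.strictMono_of_injective σ.injective
        have : (hsm.orderIsoOfSurjective σ σ.surjective) = OrderIso.refl _ := Subsingleton.elim _ _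
        ext a
        have := congrArg (fun e => (e a).val) this
        simpa using this
    have hdeg : ∀ σ, (P σ).degree = n + 1 := by
      intro σ
      simp [P, map_sum]
    have hmul : MvPolynomial.monomial m0 1 * Matrix.det (Matrix.of fun a b : Fin (n+1) =>
      (MvPolynomial.X ((f a).1, (f b).2) : MvPolynomial (Fin p × Fin q) ℝ)) =
        ∑ σ : Equiv.Perm (Fin (n+1)), MvPolynomial.C ((Equiv.Perm.sign σ : ℤ) : ℝ) * MvPolynomial.monomial (P σ + m0) 1 := by
      rw [← Matrix.det_transpose, Matrix.det_apply', Finset.mul_sum]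
      refine Finset.sum_congr rfl fun σ _ => ?_
      have : ∏ a, (Matrix.of fun a b : Fin (n+1) =>
          (MvPolynomial.X ((f a).1, (f b).2) : MvPolynomial (Fin p × Fin q) ℝ)).transpose (σ a) a =
          MvPolynomial.monomial (P σ) 1 := by
        simp only [P, MvPolynomial.monomial_sum_one]
        rfl
      have h7 : (MvPolynomial.monomial (P σ + m0) 1 : MvPolynomial (Fin p × Fin q) ℝ) =
          MvPolynomial.monomial (P σ) 1 * MvPolynomial.monomial m0 1 := by
        rw [MvPolynomial.monomial_mul, one_mul]
      rw [this, h7]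
      simp only [map_intCast]
      ring
    have hmem : MvPolynomial.monomial m0 1 * Matrix.det (Matrix.of fun a b : Fin (n+1) =>
      (MvPolynomial.X ((f a).1, (f b).2) : MvPolynomial (Fin p × Fin q) ℝ)) ∈ I := I.mul_mem_left _ hdet
    rw [hmul, ← Finset.add_sum_erase _ _ (mem_univ 1)] at hmem
    have hex : ∀ σ : Equiv.Perm (Fin (n+1)), ∃ g : MvPolynomial (Fin p × Fin q) ℝ,
        σ ≠ 1 → (MvPolynomial.monomial (P σ + m0) 1 - g ∈ I ∧ ∀ m ∈ g.support, Good n m) := by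
      intro σ
      by_cases hσ : σ = 1
      · exact ⟨0, fun h => absurd hσ h⟩
      · obtain ⟨g, hg⟩ := ih ((P σ + m0).degree * (p * q) - wt (P σ + m0)) (by
          have h1 := wt_le (P σ + m0)
          have h2 := hw σ hσ
          rw [← hN]
          simp only [map_add, hdeg, wt_add] at *
          omega) _ rfl
        exact ⟨g, fun _ => hg⟩
    choose G hG using hex
    refine ⟨- ∑ σ ∈ univ.erase 1, MvPolynomial.C ((Equiv.Perm.sign σ : ℤ) : ℝ) * G σ, ?_, ?_⟩
    · have h5 : ∑ σ ∈ univ.erase (1 : Equiv.Perm (Fin (n+1))), MvPolynomial.C ((Equiv.Perm.sign σ : ℤ) : ℝ) *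
          (MvPolynomial.monomial (P σ + m0) 1 - G σ) ∈ I :=
        I.sum_mem fun σ hσ => I.mul_mem_left _ (hG σ (Finset.ne_of_mem_erase hσ)).1
      have := I.sub_mem hmem h5
      convert this using 1
      simp only [mul_sub, Finset.sum_sub_distrib, Equiv.Perm.sign_one, Units.val_one, Int.cast_one, map_one, one_mul]
      ring
    · intro m hm
      rw [MvPolynomial.support_neg] at hm
      classical
      have := MvPolynomial.support_sum hm
      simp only [Finset.mem_biUnion] at this
      obtain ⟨σ, hσ, h6⟩ := this
      refine (hG σ (Finset.ne_of_mem_erase hσ)).2 m ?_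
      rw [MvPolynomial.mem_support_iff, MvPolynomial.coeff_C_mul] at h6
      exact MvPolynomial.mem_support_iff.mpr (right_ne_zero_of_mul h6)

lemma reduce_poly {p q n : ℕ} (I : Ideal (MvPolynomial (Fin p × Fin q) ℝ))
    (hI : ∀ (s : Finset (Fin p)) (t : Finset (Fin q)) (hs : s.card = n+1) (ht : t.card = n+1),
      minorPoly p q (n+1) s t hs ht ∈ I) (f : MvPolynomial (Fin p × Fin q) ℝ) :
    ∃ g : MvPolynomial (Fin p × Fin q) ℝ, f - g ∈ I ∧ ∀ m ∈ g.support, Good n m := by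
  choose G hG1 hG2 using fun m => reduce_mono I hI _ m rfl
  refine ⟨∑ m ∈ f.support, MvPolynomial.C (f.coeff m) * G m, ?_, ?_⟩
  · have : f - ∑ m ∈ f.support, MvPolynomial.C (f.coeff m) * G m =
        ∑ m ∈ f.support, MvPolynomial.C (f.coeff m) * (MvPolynomial.monomial m 1 - G m) := by
      simp only [mul_sub, Finset.sum_sub_distrib, MvPolynomial.C_mul_monomial, mul_one]
      rw [← f.as_sum]
    rw [this]
    exact I.sum_mem fun m _ => I.mul_mem_left _ (hG1 m)
  · intro m hm
    classical
    have := MvPolynomial.support_sum hm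
    simp only [Finset.mem_biUnion] at this
    obtain ⟨σ, hσ, h6⟩ := this
    refine hG2 σ m ?_
    rw [MvPolynomial.mem_support_iff, MvPolynomial.coeff_C_mul] at h6
    exact MvPolynomial.mem_support_iff.mpr (right_ne_zero_of_mul h6)

lemma minor_eval {p q r : ℕ} (π : Fin p × Fin q → ℝ) (h : (Matrix.of fun i j => π (i, j)).rank < r)
    (s : Finset (Fin p)) (t : Finset (Fin q)) (hs : s.card = r) (ht : t.card = r) :
    MvPolynomial.eval π (minorPoly p q r s t hs ht) = 0 := by
  unfold minorPoly
  rw [RingHom.map_det]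
  by_contra hne
  have h1 := Matrix.rank_of_isUnit _ ((Matrix.isUnit_iff_isUnit_det _).mpr (isUnit_iff_ne_zero.mpr hne))
  have h2 := Matrix.rank_submatrix_le (Matrix.of fun i j => π (i, j))
    (fun a => (s.orderIsoOfFin hs a : Fin p)) (fun a => (t.orderIsoOfFin ht a : Fin q))
  have h3 : (MvPolynomial.eval π).mapMatrix (Matrix.of fun a b : Fin r =>
    MvPolynomial.X ((s.orderIsoOfFin hs a : Fin p), (t.orderIsoOfFin ht b : Fin q))) =
    (Matrix.of fun i j => π (i, j)).submatrix
    (fun a => (s.orderIsoOfFin hs a : Fin p)) (fun a => (t.orderIsoOfFin ht a : Fin q)) := by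
    ext a b; simp
  rw [h3] at h1
  rw [Fintype.card_fin] at h1
  omega

lemma phi_ker {p q n : ℕ} (I : Ideal (MvPolynomial (Fin p × Fin q) ℝ))
    (hI : ∀ (s : Finset (Fin p)) (t : Finset (Fin q)) (hs : s.card = n+1) (ht : t.card = n+1),
      minorPoly p q (n+1) s t hs ht ∈ I)
    (f : MvPolynomial (Fin p × Fin q) ℝ) (hf : phi p q n f = 0) : f ∈ I := by
  let J : Ideal (MvPolynomial (Fin p × Fin q) ℝ) := I ⊓ RingHom.ker (phi p q n)
  have hJ : ∀ (s : Finset (Fin p)) (t : Finset (Fin q)) (hs : s.card = n+1) (ht : t.card = n+1),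
      minorPoly p q (n+1) s t hs ht ∈ J := by
    intro s t hs ht
    refine ⟨hI s t hs ht, ?_⟩
    change phi p q n _ = 0
    apply MvPolynomial.funext
    intro y
    rw [map_zero, phi, MvPolynomial.aeval_def, MvPolynomial.eval_eval₂]
    have : (MvPolynomial.eval y).comp (algebraMap ℝ (MvPolynomial ((Fin p × Fin n) ⊕ (Fin n × Fin q)) ℝ)) = RingHom.id ℝ := by
      ext; simp
    rw [this]
    change MvPolynomial.eval _ _ = 0
    apply minor_eval
    have : (Matrix.of fun (i : Fin p) (j : Fin q) => MvPolynomial.eval y (∑ k : Fin n, MvPolynomial.X (Sum.inl (i, k)) * MvPolynomial.X (Sum.inr (k, j)))) =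
      (Matrix.of fun i k => y (Sum.inl (i,k))) * (Matrix.of fun k j => y (Sum.inr (k,j))) := by
      ext i j; simp [Matrix.mul_apply]
    rw [this]
    have h1 := Matrix.rank_mul_le_left (Matrix.of fun i k => y (Sum.inl (i,k))) (Matrix.of fun k j => y (Sum.inr (k,j)))
    have h2 := Matrix.rank_le_width (Matrix.of fun i k => y (Sum.inl (i,k)))
    omega
  obtain ⟨g, hg1, hg2⟩ := reduce_poly J hJ f
  have h3 : phi p q n (f - g) = 0 := hg1.2
  rw [map_sub, hf, zero_sub, neg_eq_zero] at h3
  have := phi_good_inj g h3 hg2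
  rw [this, sub_zero] at hg1
  exact hg1.1

/-- the vanishing ideal of the set of probability matrices of rank `< r` is
generated by `1 - ∑ X_{ij}` together with the `r × r` minors of the matrix of variables. -/
theorem stmt_18 (p q r : ℕ) (hp : 2 ≤ p) (hq : 2 ≤ q) (hr2 : 2 ≤ r) (hr : r ≤ min p q)
    (P0 : Set (Fin p × Fin q → ℝ))
    (hP0 : P0 = {π | (∀ ij, 0 ≤ π ij) ∧ ∑ ij, π ij = 1 ∧
      (Matrix.of fun i j => π (i, j)).rank < r}) :
    ∀ g : MvPolynomial (Fin p × Fin q) ℝ,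
      (∀ π ∈ P0, MvPolynomial.eval π g = 0) ↔
      g ∈ Ideal.span (insert
        ((1 : MvPolynomial (Fin p × Fin q) ℝ) - ∑ ij : Fin p × Fin q, MvPolynomial.X ij)
        {d | ∃ (s : Finset (Fin p)) (t : Finset (Fin q)) (hs : s.card = r) (ht : t.card = r),
          d = minorPoly p q r s t hs ht}) := by
  intro g
  subst hP0
  constructor
  swap
  · rintro hg π ⟨h0, h1, h2⟩
    have hle : Ideal.span (insert
        ((1 : MvPolynomial (Fin p × Fin q) ℝ) - ∑ ij : Fin p × Fin q, MvPolynomial.X ij)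
        {d | ∃ (s : Finset (Fin p)) (t : Finset (Fin q)) (hs : s.card = r) (ht : t.card = r),
          d = minorPoly p q r s t hs ht}) ≤ RingHom.ker (MvPolynomial.eval π) := by
      rw [Ideal.span_le]
      rintro d (rfl | ⟨s, t, hs, ht, rfl⟩)
      · simp [RingHom.mem_ker, h1]
      · exact minor_eval π h2 s t hs ht
    exact hle hg
  · intro hg
    obtain ⟨n, rfl⟩ : ∃ n, r = n + 1 := ⟨r - 1, by omega⟩
    set I := Ideal.span (insert
        ((1 : MvPolynomial (Fin p × Fin q) ℝ) - ∑ ij : Fin p × Fin q, MvPolynomial.X ij)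
        {d | ∃ (s : Finset (Fin p)) (t : Finset (Fin q)) (hs : s.card = n+1) (ht : t.card = n+1),
          d = minorPoly p q (n+1) s t hs ht}) with hIdef
    let S : MvPolynomial (Fin p × Fin q) ℝ := ∑ ij : Fin p × Fin q, MvPolynomial.X ij
    have hS : 1 - S ∈ I := Ideal.subset_span (Set.mem_insert _ _)
    have hSpow : ∀ k : ℕ, 1 - S ^ k ∈ I := by
      intro k
      have : 1 - S ∣ 1 ^ k - S ^ k := sub_dvd_pow_sub_pow 1 S k
      rw [one_pow] at this
      exact I.mem_of_dvd this hS
    have hI : ∀ (s : Finset (Fin p)) (t : Finset (Fin q)) (hs : s.card = n+1) (ht : t.card = n+1),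
      minorPoly p q (n+1) s t hs ht ∈ I := fun s t hs ht =>
        Ideal.subset_span (Set.mem_insert_of_mem _ ⟨s, t, hs, ht, rfl⟩)
    let d := g.totalDegree
    let G : MvPolynomial (Fin p × Fin q) ℝ := ∑ m ∈ g.support, S ^ (d - m.degree) * MvPolynomial.monomial m (g.coeff m)
    have hGg : g - G ∈ I := by
      have : g - G = ∑ m ∈ g.support, (1 - S ^ (d - m.degree)) * MvPolynomial.monomial m (g.coeff m) := by
        simp only [sub_mul, one_mul, Finset.sum_sub_distrib, G]
        rw [← g.as_sum]
      rw [this]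
      exact I.sum_mem fun m _ => I.mul_mem_right _ (hSpow _)
    have hGev : ∀ x : Fin p × Fin q → ℝ, ∑ ij, x ij ≠ 0 →
        MvPolynomial.eval x G = (∑ ij, x ij) ^ d * MvPolynomial.eval (fun ij => x ij / ∑ ij, x ij) g := by
      intro x hx
      conv_rhs => rw [g.as_sum]
      simp only [G, map_sum, map_mul, map_pow, Finset.mul_sum]
      refine Finset.sum_congr rfl fun m hm => ?_
      have hdeg : m.degree ≤ d := by
        have := MvPolynomial.le_totalDegree hm
        exact this
      have hSx : MvPolynomial.eval x S = ∑ ij, x ij := by simp [S]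
      rw [hSx, MvPolynomial.eval_monomial, MvPolynomial.eval_monomial,
        Finsupp.prod_fintype _ _ (by simp), Finsupp.prod_fintype _ _ (by simp)]
      simp only [div_pow, Finset.prod_div_distrib, Finset.prod_pow_eq_pow_sum]
      rw [← Finsupp.degree_eq_sum, ← Nat.sub_add_cancel hdeg, pow_add, Nat.add_sub_cancel]
      field_simp
    have hphi : phi p q n G = 0 := by
      apply MvPolynomial.funext_set (fun _ => Set.Ioi (0:ℝ)) (fun _ => Set.Ioi_infinite 0)
      intro y hy
      have hy' : ∀ k, 0 < y k := fun k => hy k (Set.mem_univ _)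
      rw [map_zero, phi, MvPolynomial.aeval_def, MvPolynomial.eval_eval₂]
      have : (MvPolynomial.eval y).comp (algebraMap ℝ (MvPolynomial ((Fin p × Fin n) ⊕ (Fin n × Fin q)) ℝ)) = RingHom.id ℝ := by
        ext; simp
      rw [this]
      change MvPolynomial.eval _ _ = 0
      set x : Fin p × Fin q → ℝ := fun s => MvPolynomial.eval y (∑ k : Fin n, MvPolynomial.X (Sum.inl (s.1, k)) * MvPolynomial.X (Sum.inr (k, s.2))) with hxdef
      have hxe : ∀ s, x s = ∑ k : Fin n, y (Sum.inl (s.1, k)) * y (Sum.inr (k, s.2)) := by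
        intro s; simp [hxdef]
      have hn : Nonempty (Fin n) := ⟨⟨0, by omega⟩⟩
      have hxp : ∀ s, 0 < x s := by
        intro s
        rw [hxe]
        exact Finset.sum_pos (fun k _ => mul_pos (hy' _) (hy' _)) univ_nonempty
      have hsp : 0 < ∑ s, x s :=
        Finset.sum_pos (fun k _ => hxp k) ⟨(⟨0, by omega⟩, ⟨0, by omega⟩), mem_univ _⟩
      rw [hGev x hsp.ne', hg, mul_zero]
      refine ⟨fun s => (div_pos (hxp s) hsp).le, ?_, ?_⟩
      · rw [← Finset.sum_div, div_self hsp.ne']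
      · have : (Matrix.of fun (i : Fin p) (j : Fin q) => x (i, j) / ∑ s, x s) =
          (Matrix.of fun i k => y (Sum.inl (i,k))) * (Matrix.of fun k j => y (Sum.inr (k,j)) / ∑ s, x s) := by
          ext i j
          simp only [Matrix.mul_apply, Matrix.of_apply]
          rw [hxe (i, j), Finset.sum_div]
          simp only [mul_div_assoc]
        rw [this]
        have h1 := Matrix.rank_mul_le_left (Matrix.of fun i k => y (Sum.inl (i,k))) (Matrix.of fun k j => y (Sum.inr (k,j)) / ∑ s, x s)
        have h2 := Matrix.rank_le_width (Matrix.of fun i k => y (Sum.inl (i,k)))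
        omega
    have hGI : G ∈ I := phi_ker I hI G hphi
    have := I.add_mem hGg hGI
    simpa using this
end

section
/- Assume: P0 is an algebraic null hypothesis (P0 = Δ_{k-1} ∩ {π : g(π)=0 for all g ∈ G} with ∅ ≠ P0 ≠ Δ_{k-1}) with projection P̃0 ⊆ Δ̃_{k-1}; the closure of int(Δ̃_{k-1}) ∩ P̃0 equals P̃0; the vanishing ideal I(P̃0) = {h ∈ MvPolynomial (Fin (k−1)) ℝ : h = 0 on P̃0} equals the ideal generated by f_1,…,f_m; m ≤ k−1; and at every point of P̃0 the (k−1)×m matrix whose j-th column is the gradient of f_j (the vector of partial derivatives pderiv i f_j, evaluated at that point) has rank m. If φ is an NTUB test of P0 of sample size n with size α, then there exist polynomials h_{ij} ∈ MvPolynomial (Fin (k−1)) ℝ (1 ≤ i, j ≤ m) such that β_φ(π'_1,…,π'_{k-1}, 1−∑ i π' i) = ∑_{i,j} h_{ij}(π')·f_i(π')·f_j(π') + α for every π' ∈ ℝ^{k-1} — in particular the polynomial β_φ − α, in projected coordinates, belongs to the square I(P̃0)² of the vanishing ideal — and the function π' ↦ ∑_{i,j} h_{ij}(π') f_i(π') f_j(π')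 is ≥ 0 on Δ̃_{k-1}; if moreover φ is SUB, this function is > 0 on Δ̃_{k-1} \ P̃0. -/
open Finset

theorem aux_hasDerivAt {N : ℕ} (a : Fin N → ℝ) (i : Fin N) (q : MvPolynomial (Fin N) ℝ) :
    HasDerivAt (fun t : ℝ => MvPolynomial.eval (Function.update a i t) q)
      (MvPolynomial.eval a (MvPolynomial.pderiv i q)) (a i) := by
  induction q using MvPolynomial.induction_on with
  | C c => simpa using hasDerivAt_const (a i) c
  | add p q hp hq =>
    simp only [map_add]
    exact hp.add hq
  | mul_X p j hp =>
    have hX : HasDerivAt (fun t : ℝ => Function.update a i t j)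
        (MvPolynomial.eval a (MvPolynomial.pderiv i (MvPolynomial.X j))) (a i) := by
      by_cases h : j = i
      · subst h
        simp only [MvPolynomial.pderiv_X_self, map_one, Function.update_self]
        exact hasDerivAt_id (a j)
      · rw [MvPolynomial.pderiv_X_of_ne h]
        simpa [Function.update_of_ne h] using hasDerivAt_const (a i) (a j)
    have := hp.mul hX
    simp only [Function.update_eq_self] at this
    simp only [Derivation.leibniz, map_add, map_mul, smul_eq_mul, MvPolynomial.eval_X]
    refine HasDerivAt.congr_deriv this ?_
    ring

theorem aux_rank {N m : ℕ} (M : Matrix (Fin N) (Fin m) ℝ) (h : M.rank = m) (v : Fin m → ℝ)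
    (hv : M.mulVec v = 0) : v = 0 := by
  have h1 := LinearMap.finrank_range_add_finrank_ker M.mulVecLin
  have h2 : Module.finrank ℝ (LinearMap.range M.mulVecLin) = m := h
  have h3 : Module.finrank ℝ (LinearMap.ker M.mulVecLin) = 0 := by
    simp at h1; omega
  have h4 := Submodule.finrank_eq_zero.1 h3
  have : v ∈ LinearMap.ker M.mulVecLin := by simpa using hv
  rw [h4] at this
  simpa using this

theorem aux_cont (k n : ℕ) (φ : (Fin k → ℕ) → ℝ) : Continuous (powerFn (Fin k) n φ) := by
  unfold powerFn
  fun_prop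

theorem aux_le (k n : ℕ) (G : Set (MvPolynomial (Fin k) ℝ)) (P0 : Set (Fin k → ℝ))
    (hP0 : P0 = probSimplex (Fin k) ∩ {π | ∀ g ∈ G, MvPolynomial.eval π g = 0})
    (hneq : P0 ≠ probSimplex (Fin k)) (φ : (Fin k → ℕ) → ℝ)
    (hU : Unbiased (Fin k) n P0 φ) (x y : Fin k → ℝ) (hx : x ∈ P0) (hy : y ∈ P0) :
    powerFn (Fin k) n φ x ≤ powerFn (Fin k) n φ y := by
  obtain ⟨z, hz, g, hg, hgz⟩ : ∃ z ∈ probSimplex (Fin k), ∃ g ∈ G, MvPolynomial.eval z g ≠ 0 := by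
    by_contra! hcon
    apply hneq
    rw [hP0]
    exact Set.inter_eq_left.2 fun z hz g hg => hcon z hz g hg
  have hyS : y ∈ probSimplex (Fin k) := by rw [hP0] at hy; exact hy.1
  let p : Polynomial ℝ := MvPolynomial.aeval
    (fun i => Polynomial.C (y i) + Polynomial.X * Polynomial.C (z i - y i)) g
  have hp : ∀ t : ℝ, p.eval t = MvPolynomial.eval (fun i => y i + t * (z i - y i)) g := by
    intro t
    have : (Polynomial.evalRingHom t).comp (MvPolynomial.aeval
        (fun i => Polynomial.C (y i) + Polynomial.X * Polynomial.C (z i - y i))).toRingHom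
        = MvPolynomial.eval (fun i => y i + t * (z i - y i)) := by
      apply MvPolynomial.ringHom_ext
      · intro r; simp
      · intro i; simp
    exact congrArg (fun F => F g) this
  have hp0 : p ≠ 0 := by
    intro h0
    apply hgz
    have := hp 1
    rw [h0] at this
    simpa using this.symm
  have hfin : (p.rootSet ℝ).Finite := p.rootSet_finite ℝ
  have hev1 : ∀ᶠ t in nhdsWithin (0 : ℝ) (Set.Ioi 0), p.eval t ≠ 0 := by
    have h1 : ∀ᶠ t in nhdsWithin (0 : ℝ) {0}ᶜ, t ∈ (p.rootSet ℝ)ᶜ := by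
      have : (p.rootSet ℝ \ {0})ᶜ ∈ nhds (0 : ℝ) :=
        (hfin.subset Set.sdiff_subset).isClosed.isOpen_compl.mem_nhds (by simp)
      filter_upwards [mem_nhdsWithin_of_mem_nhds this, self_mem_nhdsWithin] with t ht ht0 hr
      exact ht ⟨hr, ht0⟩
    have h2 := h1.filter_mono (nhdsWithin_mono (0 : ℝ) (s := Set.Ioi 0) (t := {0}ᶜ)
      (fun t ht => ne_of_gt ht))
    filter_upwards [h2] with t ht h0
    exact ht ((Polynomial.mem_rootSet_of_ne hp0).2 (by simpa using h0))
  have hev2 : ∀ᶠ t in nhdsWithin (0 : ℝ) (Set.Ioi 0), t < 1 :=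
    mem_nhdsWithin_of_mem_nhds (Iio_mem_nhds one_pos)
  have hc : Continuous (fun t : ℝ => powerFn (Fin k) n φ (fun i => y i + t * (z i - y i))) :=
    (aux_cont k n φ).comp (by fun_prop)
  have ht : Filter.Tendsto (fun t : ℝ => powerFn (Fin k) n φ (fun i => y i + t * (z i - y i)))
      (nhdsWithin (0 : ℝ) (Set.Ioi 0)) (nhds (powerFn (Fin k) n φ y)) := by
    have := (hc.tendsto 0).mono_left (nhdsWithin_le_nhds (s := Set.Ioi 0))
    simpa using this
  refine ge_of_tendsto ht ?_
  filter_upwards [hev1, hev2, self_mem_nhdsWithin] with t h1 h2 h3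
  have h3 : 0 < t := h3
  refine hU x hx _ ⟨⟨fun i => ?_, ?_⟩, ?_⟩
  · have := hyS.1 i
    have := hz.1 i
    nlinarith [mul_nonneg h3.le (hz.1 i), mul_nonneg (sub_nonneg.2 h2.le) (hyS.1 i)]
  · rw [Finset.sum_add_distrib, ← Finset.mul_sum, Finset.sum_sub_distrib, hyS.2, hz.2]; simp
  · intro hmem
    rw [hP0] at hmem
    exact h1 ((hp t).trans (hmem.2 g hg))

theorem aux_lift (k : ℕ) (hk : 2 ≤ k) (p : Fin (k - 1) → ℝ) (hp : p ∈ projSimplex k) :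
    liftProj k p ∈ probSimplex (Fin k) := by
  obtain ⟨k, rfl⟩ : ∃ l, k = l + 1 := ⟨k - 1, by omega⟩
  refine ⟨fun i => ?_, ?_⟩
  · unfold liftProj
    split_ifs with h
    · exact hp.1 _
    · have := hp.2; linarith
  · rw [Fin.sum_univ_castSucc]
    simp [liftProj]

theorem aux_poly (k n : ℕ) (φ : (Fin k → ℕ) → ℝ) (α : ℝ) :
    ∃ q : MvPolynomial (Fin (k - 1)) ℝ, ∀ p,
      MvPolynomial.eval p q = powerFn (Fin k) n φ (liftProj k p) - α := by
  refine ⟨∑ x ∈ countVecs (Fin k) n,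
    MvPolynomial.C (φ x * (Nat.multinomial Finset.univ x : ℝ)) *
      ∏ i : Fin k, (if h : (i : ℕ) < k - 1 then MvPolynomial.X ⟨(i : ℕ), h⟩
        else 1 - ∑ j, MvPolynomial.X j) ^ x i - MvPolynomial.C α, fun p => ?_⟩
  simp only [map_sub, map_sum, map_mul, map_prod, map_pow, MvPolynomial.eval_C, powerFn]
  congr 1
  refine Finset.sum_congr rfl fun x _ => ?_
  congr 1
  refine Finset.prod_congr rfl fun i _ => ?_
  unfold liftProj
  split_ifs <;> simp

theorem aux_repr {k m : ℕ} (f : Fin m → MvPolynomial (Fin (k - 1)) ℝ)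
    (q : MvPolynomial (Fin (k - 1)) ℝ) (hq : q ∈ Ideal.span (Set.range f)) :
    ∃ c : Fin m → MvPolynomial (Fin (k - 1)) ℝ, ∑ i, c i * f i = q :=
  Ideal.mem_span_range_iff_exists_fun.1 hq

/-- for a vanishing ideal generated by `f_1, …, f_m` whose gradients have full
rank `m` on the null set, every size-α NTUB power function has the representation
`∑_{i,j} h_{ij} f_i f_j + α` with the quadratic part nonnegative on the projected simplex
(and positive off the null set when the test is SUB). -/
theorem stmt_19 (k n : ℕ) (hk : 2 ≤ k) (hn : 1 ≤ n)
    (G : Set (MvPolynomial (Fin k) ℝ)) (P0 : Set (Fin k → ℝ))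
    (hP0 : P0 = probSimplex (Fin k) ∩ {π | ∀ g ∈ G, MvPolynomial.eval π g = 0})
    (hne : P0.Nonempty) (hneq : P0 ≠ probSimplex (Fin k))
    (Pt0 : Set (Fin (k - 1) → ℝ))
    (hPt0 : Pt0 = {π' ∈ projSimplex k | liftProj k π' ∈ P0})
    (hclos : closure (interior (projSimplex k) ∩ Pt0) = Pt0)
    (m : ℕ) (hm : m ≤ k - 1)
    (f : Fin m → MvPolynomial (Fin (k - 1)) ℝ)
    (hVI : ∀ h : MvPolynomial (Fin (k - 1)) ℝ,
      (∀ π' ∈ Pt0, MvPolynomial.eval π' h = 0) ↔ h ∈ Ideal.span (Set.range f))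
    (hrank : ∀ π' ∈ Pt0,
      (Matrix.of fun (i : Fin (k - 1)) (j : Fin m) =>
        MvPolynomial.eval π' (MvPolynomial.pderiv i (f j))).rank = m)
    (α : ℝ) (φ : (Fin k → ℕ) → ℝ)
    (hφ : IsTest (Fin k) n φ) (hNTUB : IsNTUB (Fin k) n P0 φ)
    (hsize : HasSize (Fin k) n P0 α φ) :
    ∃ h : Fin m → Fin m → MvPolynomial (Fin (k - 1)) ℝ,
      (∀ π' : Fin (k - 1) → ℝ,
        powerFn (Fin k) n φ (liftProj k π') =
          (∑ i, ∑ j, MvPolynomial.eval π' (h i j) *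
            MvPolynomial.eval π' (f i) * MvPolynomial.eval π' (f j)) + α) ∧
      (∀ π' ∈ projSimplex k,
        0 ≤ ∑ i, ∑ j, MvPolynomial.eval π' (h i j) *
          MvPolynomial.eval π' (f i) * MvPolynomial.eval π' (f j)) ∧
      (IsSUB (Fin k) n P0 φ → ∀ π' ∈ projSimplex k \ Pt0,
        0 < ∑ i, ∑ j, MvPolynomial.eval π' (h i j) *
          MvPolynomial.eval π' (f i) * MvPolynomial.eval π' (f j)) := by
  obtain ⟨hU, -⟩ := hNTUB
  have hconst : ∀ x ∈ P0, powerFn (Fin k) n φ x = α := by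
    intro x hx
    apply le_antisymm
    · exact hsize.1 ⟨x, hx, rfl⟩
    · apply hsize.2
      rintro _ ⟨y, hy, rfl⟩
      exact aux_le k n G P0 hP0 hneq φ hU y x hy hx
  obtain ⟨x0, hx0⟩ := hne
  have hge : ∀ x ∈ probSimplex (Fin k), α ≤ powerFn (Fin k) n φ x := by
    intro x hx
    by_cases h : x ∈ P0
    · exact (hconst x h).ge
    · rw [← hconst x0 hx0]
      exact hU x0 hx0 x ⟨hx, h⟩
  obtain ⟨q, hq⟩ := aux_poly k n φ α
  have hPtP : ∀ p ∈ Pt0, p ∈ projSimplex k ∧ liftProj k p ∈ P0 := by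
    intro p hp
    rw [hPt0] at hp
    exact hp
  have hq0 : ∀ p ∈ Pt0, MvPolynomial.eval p q = 0 := by
    intro p hp
    rw [hq, hconst _ (hPtP p hp).2, sub_self]
  have hqnn : ∀ p ∈ projSimplex k, 0 ≤ MvPolynomial.eval p q := by
    intro p hp
    rw [hq]
    exact sub_nonneg.2 (hge _ (aux_lift k hk p hp))
  obtain ⟨c, hc⟩ := aux_repr f q ((hVI q).1 hq0)
  have hf0 : ∀ i, ∀ p ∈ Pt0, MvPolynomial.eval p (f i) = 0 := fun i =>
    (hVI (f i)).2 (Ideal.subset_span ⟨i, rfl⟩)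
  have hcint : ∀ p ∈ interior (projSimplex k) ∩ Pt0, ∀ i, MvPolynomial.eval p (c i) = 0 := by
    rintro p ⟨hpi, hp⟩
    have hv : (fun j => MvPolynomial.eval p (c j)) = 0 := by
      apply aux_rank _ (hrank p hp)
      funext i
      have hd := aux_hasDerivAt p i q
      have hmin : IsLocalMin (fun t : ℝ => MvPolynomial.eval (Function.update p i t) q) (p i) := by
        have hcu : Continuous (fun t : ℝ => Function.update p i t) :=
          continuous_const.update i continuous_id
        have hmem : ∀ᶠ t in nhds (p i), Function.update p i t ∈ interior (projSimplex k) :=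
          hcu.continuousAt.eventually_mem (isOpen_interior.mem_nhds (by simpa using hpi))
        filter_upwards [hmem] with t ht
        simp only [Function.update_eq_self]
        rw [hq0 p hp]
        exact hqnn _ (interior_subset ht)
      have hz := hmin.hasDerivAt_eq_zero hd
      rw [← hc] at hz
      simp only [map_sum, Derivation.leibniz, map_add, smul_eq_mul, map_mul, hf0 _ p hp,
        zero_mul, add_zero] at hz
      simp only [Matrix.mulVec, dotProduct, Matrix.of_apply, Pi.zero_apply]
      rw [← hz]
      exact Finset.sum_congr rfl fun j _ => mul_comm _ _
    exact fun i => congrFun hv i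
  have hcv : ∀ i, ∀ p ∈ Pt0, MvPolynomial.eval p (c i) = 0 := by
    intro i p hp
    have hcl : IsClosed {p | MvPolynomial.eval p (c i) = 0} :=
      isClosed_eq (MvPolynomial.continuous_eval _) continuous_const
    rw [← hclos] at hp
    exact closure_minimal (fun p hp => hcint p hp i) hcl hp
  choose d hd using fun i => aux_repr f (c i) ((hVI (c i)).1 (hcv i))
  have key : ∀ p : Fin (k - 1) → ℝ, (∑ i, ∑ j, MvPolynomial.eval p (d i j) *
      MvPolynomial.eval p (f i) * MvPolynomial.eval p (f j)) =
      powerFn (Fin k) n φ (liftProj k p) - α := by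
    intro p
    rw [← hq p, ← hc, map_sum]
    refine Finset.sum_congr rfl fun i _ => ?_
    rw [← hd i, map_mul, map_sum, Finset.sum_mul]
    refine Finset.sum_congr rfl fun j _ => ?_
    rw [map_mul]; ring
  refine ⟨d, fun p => ?_, fun p hp => ?_, fun hS p hp => ?_⟩
  · rw [key]; ring
  · rw [key, ← hq]; exact hqnn p hp
  · rw [key, sub_pos, ← hconst x0 hx0]
    refine hS x0 hx0 _ ⟨aux_lift k hk p hp.1, fun h => hp.2 ?_⟩
    rw [hPt0]
    exact ⟨hp.1, h⟩
end
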